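/- arXiv:0812.1064 — 2 statements merged into one kernel-verified Lean document; each statement's English description precedes it below -/
import Mathlib

section
/- A finite simple graph G belongs to D̂_3 if and only if G is isomorphic to the complete graph K_5 or to the complete tripartite graph K_{2,2,2} (the octahedron). -/
open SimpleGraph

/-- The degree of a vertex in a finite simple graph. -/
noncomputable def degC {V : Type} [Fintype V] (G : SimpleGraph V) (v : V) : ℕ := by
  classical exact G.degree v

/-- The minimum degree of a finite simple graph. -/
noncomputable def minDegC {V : Type} [Fintype V] (G : SimpleGraph V) : ℕ := by
  classical exact G.minDegree

/-- `H` is a minor of `G`: there is a family of nonempty, pairwise disjoint,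
connected branch sets, one for each vertex of `H`, such that every edge of `H`
is realised by an edge of `G` between the corresponding branch sets. -/
def IsMinorOf {W V : Type} (H : SimpleGraph W) (G : SimpleGraph V) : Prop :=
  ∃ B : W → Set V,
    (∀ w, (B w).Nonempty) ∧
    (∀ u w : W, u ≠ w → Disjoint (B u) (B w)) ∧
    (∀ w, (G.induce (B w)).Connected) ∧
    (∀ ⦃u w : W⦄, H.Adj u w → ∃ a ∈ B u, ∃ b ∈ B w, G.Adj a b)

/-- `H` is a proper minor of `G`: a minor that is not isomorphic to `G`. -/
def IsProperMinorOf {W V : Type} (H : SimpleGraph W) (G : SimpleGraph V) : Prop :=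
  IsMinorOf H G ∧ ¬ Nonempty (H ≃g G)

/-- `G ∈ D_k`: every minor of `G` has minimum degree at most `k`. -/
def MemD (k : ℕ) {V : Type} (G : SimpleGraph V) : Prop :=
  ∀ (W : Type) [Fintype W] (H : SimpleGraph W), IsMinorOf H G → minDegC H ≤ k

/-- `G ∈ D̂_k`: `G ∉ D_k` but every proper minor of `G` is in `D_k`. -/
def MemDHat (k : ℕ) {V : Type} (G : SimpleGraph V) : Prop :=
  ¬ MemD k G ∧ ∀ (W : Type) [Fintype W] (H : SimpleGraph W), IsProperMinorOf H G → MemD k H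

/-- A nonempty graph all of whose vertices have degree at least four. -/
def FourDense {V : Type} (G : SimpleGraph V) : Prop :=
  Nonempty V ∧ ∀ v, 4 ≤ (G.neighborSet v).ncard

theorem not_minDegC_le_three_iff {V : Type} [Fintype V] (G : SimpleGraph V) :
    ¬ minDegC G ≤ 3 ↔ FourDense G := by
  classical
  have hdeg : ∀ v, (G.neighborSet v).ncard = G.degree v := fun v => by
    rw [Set.ncard_eq_toFinset_card', ← SimpleGraph.neighborFinset_def, card_neighborFinset_eq_degree]
  have hmin : minDegC G = G.minDegree := by
    unfold minDegC
    congr!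
  rw [hmin, not_le]
  constructor
  · intro h
    refine ⟨?_, fun v => ?_⟩
    · by_contra hV
      rw [not_nonempty_iff] at hV
      rw [SimpleGraph.minDegree_of_subsingleton] at h
      omega
    · rw [hdeg]
      exact h.trans_le (G.minDegree_le_degree v)
  · rintro ⟨hV, h⟩
    exact G.le_minDegree_of_forall_le_degree 4 fun v => hdeg v ▸ h v

section Minor

variable {U W V : Type}

theorem connected_induce_singleton (G : SimpleGraph V) (v : V) :
    (G.induce {v}).Connected := by
  rw [connected_iff_exists_forall_reachable]
  refine ⟨⟨v, rfl⟩, ?_⟩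
  rintro ⟨w, rfl⟩
  rfl

theorem IsMinorOf.refl (G : SimpleGraph V) : IsMinorOf G G :=
  ⟨fun v => {v}, fun v => ⟨v, rfl⟩, fun u w h => by simpa using h,
    connected_induce_singleton G, fun u w h => ⟨u, rfl, w, rfl, h⟩⟩

theorem IsMinorOf.trans {K : SimpleGraph U} {H : SimpleGraph W} {G : SimpleGraph V}
    (h₁ : IsMinorOf K H) (h₂ : IsMinorOf H G) : IsMinorOf K G := by
  obtain ⟨A, hA, hAd, hAc, hAe⟩ := h₁
  obtain ⟨B, hB, hBd, hBc, hBe⟩ := h₂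
  refine ⟨fun u => ⋃ w ∈ A u, B w, fun u => ?_, fun u u' huu' => ?_, fun u => ?_,
    fun u u' huu' => ?_⟩
  · obtain ⟨w, hw⟩ := hA u
    obtain ⟨v, hv⟩ := hB w
    exact ⟨v, Set.mem_biUnion hw hv⟩
  · simp only [Set.disjoint_iUnion_left, Set.disjoint_iUnion_right]
    intro w hw w' hw'
    refine hBd _ _ ?_
    rintro rfl
    exact Set.disjoint_left.1 (hAd u u' huu') hw' hw
  · have mem : ∀ {w}, w ∈ A u → ∀ {v}, v ∈ B w → v ∈ ⋃ w ∈ A u, B w :=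
      fun hw _ hv => Set.mem_biUnion hw hv
    have inner : ∀ (w) (hw : w ∈ A u) (a b) (ha : a ∈ B w) (hb : b ∈ B w),
        (G.induce (⋃ w ∈ A u, B w)).Reachable ⟨a, mem hw ha⟩ ⟨b, mem hw hb⟩ :=
      fun w hw a b ha hb => ((hBc w).preconnected ⟨a, ha⟩ ⟨b, hb⟩).map
        (induceHomOfLE G (fun _ hx => mem hw hx)).toHom
    have across : ∀ (w w' : A u), ((H.induce (A u)).Walk w w') →
        ∀ (a b) (ha : a ∈ B w) (hb : b ∈ B w'),
        (G.induce (⋃ w ∈ A u, B w)).Reachable ⟨a, mem w.2 ha⟩ ⟨b, mem w'.2 hb⟩ := by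
      intro w w' p
      induction p with
      | nil => exact fun a b ha hb => inner _ (Subtype.prop _) a b ha hb
      | @cons x y z hxy p ih =>
        intro a b ha hb
        obtain ⟨c, hc, d, hd, hcd⟩ := hBe (show H.Adj x y from hxy)
        refine (inner _ x.2 a c ha hc).trans (Reachable.trans ?_ (ih d b hd hb))
        exact Adj.reachable (show (G.induce _).Adj ⟨c, mem x.2 hc⟩ ⟨d, mem y.2 hd⟩ from hcd)
    obtain ⟨w, hw⟩ := hA u
    obtain ⟨v, hv⟩ := hB w
    rw [connected_iff_exists_forall_reachable]
    refine ⟨⟨v, mem hw hv⟩, ?_⟩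
    rintro ⟨x, hx⟩
    obtain ⟨w', hw', hx'⟩ := Set.mem_iUnion₂.1 hx
    obtain ⟨p⟩ := (hAc u).preconnected ⟨w, hw⟩ ⟨w', hw'⟩
    exact across _ _ p v x hv hx'
  · obtain ⟨w, hw, w', hw', h⟩ := hAe huu'
    obtain ⟨a, ha, b, hb, hab⟩ := hBe h
    exact ⟨a, Set.mem_biUnion hw ha, b, Set.mem_biUnion hw' hb, hab⟩

theorem IsMinorOf.exists_injective {H : SimpleGraph W} {G : SimpleGraph V} (h : IsMinorOf H G) :
    ∃ f : W → V, Function.Injective f := by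
  obtain ⟨B, hB, hBd, -, -⟩ := h
  choose f hf using hB
  refine ⟨f, fun u w huw => ?_⟩
  by_contra hne
  exact Set.disjoint_left.1 (hBd u w hne) (hf u) (huw ▸ hf w)

theorem IsMinorOf.card_le [Fintype W] [Fintype V] {H : SimpleGraph W} {G : SimpleGraph V}
    (h : IsMinorOf H G) : Fintype.card W ≤ Fintype.card V :=
  let ⟨_, hf⟩ := h.exists_injective
  Fintype.card_le_of_injective _ hf

end Minor

section StarMinor

variable {V : Type} (G : SimpleGraph V) (K : Set V) (f : V → V)

/-- The graph obtained from the subgraph of `G` induced by `K` by contracting each fibre of the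
retraction `f` onto its representative. -/
def starMinor : SimpleGraph {x // x ∈ K ∧ f x = x} where
  Adj u w := u ≠ w ∧ ∃ a ∈ K, ∃ b ∈ K, f a = u ∧ f b = w ∧ G.Adj a b
  symm := ⟨fun _ _ ⟨h, a, ha, b, hb, hau, hbw, hab⟩ => ⟨h.symm, b, hb, a, ha, hbw, hau, hab.symm⟩⟩
  loopless := ⟨fun _ h => h.1 rfl⟩

/-- `f` maps `K` to itself, is idempotent there, and moves vertices only along edges of `G`. -/
def IsStarMap : Prop :=
  ∀ a ∈ K, f a ∈ K ∧ f (f a) = f a ∧ (f a = a ∨ G.Adj a (f a))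

variable {G K f}

theorem starMinor_isMinorOf (hf : IsStarMap G K f) : IsMinorOf (starMinor G K f) G := by
  refine ⟨fun w => {a | a ∈ K ∧ f a = w}, fun w => ⟨w, w.2⟩, fun u w huw => ?_, fun w => ?_, ?_⟩
  · rw [Set.disjoint_left]
    rintro a ⟨-, hu⟩ ⟨-, hw⟩
    exact huw (Subtype.ext (hu.symm.trans hw))
  · rw [connected_iff_exists_forall_reachable]
    refine ⟨⟨w, w.2⟩, ?_⟩
    rintro ⟨a, haK, ha⟩
    obtain h | h := (hf a haK).2.2
    · have : a = w := h.symm.trans ha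
      subst this
      rfl
    · rw [ha] at h
      exact Adj.reachable h.symm
  · rintro u w ⟨-, a, ha, b, hb, hau, hbw, hab⟩
    exact ⟨a, ⟨ha, hau⟩, b, ⟨hb, hbw⟩, hab⟩

theorem le_ncard_neighborSet_starMinor [Finite V] (hf : IsStarMap G K f) {n : ℕ}
    (w : {x // x ∈ K ∧ f x = x}) (N : Set V)
    (hN : ∀ x ∈ N, x ∈ K ∧ f x ≠ w ∧ ∃ a ∈ K, f a = w ∧ G.Adj a x) (hinj : Set.InjOn f N)
    (hcard : n ≤ N.ncard) : n ≤ ((starMinor G K f).neighborSet w).ncard := by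
  refine hcard.trans ?_
  rw [← hinj.ncard_image, ← Set.ncard_image_of_injective _ Subtype.val_injective]
  refine Set.ncard_le_ncard ?_ (Set.toFinite _)
  rintro _ ⟨x, hx, rfl⟩
  obtain ⟨hxK, hxw, a, ha, haw, hax⟩ := hN x hx
  obtain ⟨h₁, h₂, -⟩ := hf x hxK
  exact ⟨⟨f x, h₁, h₂⟩, ⟨fun h => hxw (by rw [h]), a, ha, x, hxK, haw, rfl, hax⟩, rfl⟩

end StarMinor

section Exempt

variable {V : Type}

/-- `X` is a clique on at most three vertices, and there are vertices outside `X`, all of degree at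
least four. -/
def IsExemptClique (G : SimpleGraph V) (X : Set V) : Prop :=
  X.ncard ≤ 3 ∧ G.IsClique X ∧ (∃ w, w ∉ X) ∧ ∀ w ∉ X, 4 ≤ (G.neighborSet w).ncard

/-- `w` has four neighbours in `starMinor G K f`, as witnessed by vertices of `G`. -/
def HasFourImages (G : SimpleGraph V) (K : Set V) (f : V → V) (w : V) : Prop :=
  ∃ N : Set V, (∀ x ∈ N, x ∈ K ∧ f x ≠ w ∧ ∃ a ∈ K, f a = w ∧ G.Adj a x) ∧ Set.InjOn f N ∧
    4 ≤ N.ncard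

theorem hasFourImages_of_injOn {G : SimpleGraph V} {K : Set V} {f : V → V} {w : V}
    (hw : w ∈ K) (hfw : f w = w) (hdeg : 4 ≤ (G.neighborSet w).ncard)
    (hN : ∀ x, G.Adj w x → x ∈ K ∧ f x ≠ w)
    (hinj : ∀ x y, G.Adj w x → G.Adj w y → f x = f y → x = y) : HasFourImages G K f w :=
  ⟨G.neighborSet w, fun x hx => ⟨(hN x hx).1, (hN x hx).2, w, hw, hfw, hx⟩,
    fun x hx y hy h => hinj x y hx hy h, hdeg⟩

theorem isExemptClique_starMinor [Finite V] {G : SimpleGraph V} {K : Set V} {f : V → V}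
    (hf : IsStarMap G K f) (X : Set V) (hX : X.ncard ≤ 3)
    (hclique : ∀ x ∈ X, ∀ y ∈ X, x ≠ y → ∃ a ∈ K, ∃ b ∈ K, f a = x ∧ f b = y ∧ G.Adj a b)
    (hne : ∃ w ∈ K, f w = w ∧ w ∉ X)
    (hdeg : ∀ w ∈ K, f w = w → w ∉ X → HasFourImages G K f w) :
    IsExemptClique (starMinor G K f) (Subtype.val ⁻¹' X) := by
  refine ⟨?_, ?_, ?_, ?_⟩
  · refine le_trans ?_ hX
    rw [← Set.ncard_image_of_injective _ Subtype.val_injective]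
    exact Set.ncard_le_ncard (Set.image_preimage_subset _ _) (Set.toFinite _)
  · intro x hx y hy hxy
    exact ⟨hxy, hclique x hx y hy fun h => hxy (Subtype.ext h)⟩
  · obtain ⟨w, hw, hfw, hwX⟩ := hne
    exact ⟨⟨w, hw, hfw⟩, hwX⟩
  · rintro ⟨w, hw, hfw⟩ hwX
    obtain ⟨N, hN, hinj, hcard⟩ := hdeg w hw hfw hwX
    exact le_ncard_neighborSet_starMinor hf _ N hN hinj hcard

open Classical in
/-- The retraction identifying `u` with `v`. -/
noncomputable def mergeInto (u v : V) : V → V := fun x => if x = u then v else x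

theorem isStarMap_mergeInto {G : SimpleGraph V} {u v : V} (h : G.Adj u v) :
    IsStarMap G Set.univ (mergeInto u v) := by
  intro a _
  have := h.ne
  unfold mergeInto
  grind

theorem isStarMap_id (G : SimpleGraph V) (K : Set V) : IsStarMap G K id :=
  fun _ ha => ⟨ha, rfl, Or.inl rfl⟩

theorem ncard_triple_le (x y z : V) : ({x, y, z} : Set V).ncard ≤ 3 := by
  have h₁ := Set.ncard_insert_le x {y, z}
  have h₂ := Set.ncard_insert_le y {z}
  have h₃ := Set.ncard_singleton z
  omega

theorem exists_adj_ne_of_four_le {G : SimpleGraph V} {w : V}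
    (h : 4 ≤ (G.neighborSet w).ncard) (x y z : V) :
    ∃ t, G.Adj w t ∧ t ≠ x ∧ t ≠ y ∧ t ≠ z := by
  have h₁ := ncard_triple_le x y z
  obtain ⟨t, ht, hn⟩ := Set.exists_mem_notMem_of_ncard_lt_ncard
    (show ({x, y, z} : Set V).ncard < (G.neighborSet w).ncard by omega)
  simp only [Set.mem_insert_iff, Set.mem_singleton_iff, not_or] at hn
  exact ⟨t, ht, hn⟩

/-- Some finite minor of `G` is nonempty and has minimum degree at least four. -/
def HasFourDenseMinor (G : SimpleGraph V) : Prop :=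
  ∃ (W : Type) (_ : Fintype W) (H : SimpleGraph W), IsMinorOf H G ∧ FourDense H

theorem IsExemptClique.hasFourDenseMinor_of_starMinor [Fintype V] {G : SimpleGraph V}
    (ih : ∀ (W : Type) [Fintype W] (H : SimpleGraph W) (X : Set W),
      Fintype.card W < Fintype.card V → IsExemptClique H X → HasFourDenseMinor H)
    (K : Set V) (f : V → V) (hproper : ∃ x, ¬ (x ∈ K ∧ f x = x))
    (hf : IsStarMap G K f) {X : Set _} (hX : IsExemptClique (starMinor G K f) X) :
    HasFourDenseMinor G := by
  classical
  obtain ⟨x, hx⟩ := hproper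
  obtain ⟨W, hW, H, hH, hd⟩ := ih _ (starMinor G K f) X (Fintype.card_subtype_lt hx) hX
  exact ⟨W, hW, H, hH.trans (starMinor_isMinorOf hf), hd⟩

theorem IsExemptClique.hasFourDenseMinor [Fintype V] {G : SimpleGraph V} {X : Set V}
    (hX : IsExemptClique G X) : HasFourDenseMinor G := by
  induction hn : Fintype.card V using Nat.strong_induction_on generalizing V with
  | _ n IH =>
  have ih : ∀ (W : Type) [Fintype W] (H : SimpleGraph W) (X : Set W),
      Fintype.card W < Fintype.card V → IsExemptClique H X → HasFourDenseMinor H :=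
    fun W _ H X hlt h => IH _ (hn ▸ hlt) h rfl
  have low : ∀ x y z : V, G.Adj x y → G.Adj y z → G.Adj x z →
      (∀ w, w ≠ x → w ≠ y → w ≠ z → 4 ≤ (G.neighborSet w).ncard) →
      (∃ w, w ≠ x ∧ w ≠ y ∧ w ≠ z) →
      ¬ 4 ≤ (G.neighborSet x).ncard → HasFourDenseMinor G := by
    intro x y z hxy hyz hxz hdeg hex hx
    have hxy' := hxy.ne
    have hyz' := hyz.ne
    have hxz' := hxz.ne
    by_cases hs : ∃ s, G.Adj x s ∧ s ≠ y ∧ s ≠ z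
    · obtain ⟨s, hxs, hsy, hsz⟩ := hs
      have hxs' := hxs.ne
      have huniq : ∀ t, G.Adj x t → t = s ∨ t = y ∨ t = z := by
        intro t ht
        by_contra! hc
        refine hx ?_
        have h4 : ({t, s, y, z} : Set V).ncard = 4 :=
          Set.ncard_eq_four.2 ⟨t, s, y, z, hc.1, hc.2.1, hc.2.2, hsy, hsz, hyz', rfl⟩
        rw [← h4]
        refine Set.ncard_le_ncard ?_ (Set.toFinite _)
        rintro w (rfl | rfl | rfl | rfl) <;> assumption
      obtain ⟨t, ht⟩ := exists_adj_ne_of_four_le (hdeg s hxs'.symm hsy hsz) x y z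
      have hst := ht.1.ne
      refine IsExemptClique.hasFourDenseMinor_of_starMinor ih Set.univ (mergeInto s x)
        ⟨s, by unfold mergeInto; grind⟩ (isStarMap_mergeInto hxs.symm)
        (isExemptClique_starMinor (isStarMap_mergeInto hxs.symm) {x, y, z}
          (ncard_triple_le x y z) ?_ ⟨t, ?_⟩ ?_)
      · intro p hp q hq hpq
        refine ⟨p, trivial, q, trivial, ?_⟩
        have h₁ := hxy.symm
        have h₂ := hyz.symm
        have h₃ := hxz.symm
        simp only [Set.mem_insert_iff, Set.mem_singleton_iff] at hp hq
        unfold mergeInto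
        grind
      · simp only [Set.mem_insert_iff, Set.mem_singleton_iff]
        unfold mergeInto
        grind
      · intro w _ hfw hwX
        simp only [Set.mem_insert_iff, Set.mem_singleton_iff, not_or] at hwX
        have hws : w ≠ s := by
          rintro rfl
          simp only [mergeInto, if_true] at hfw
          exact hxs' hfw
        have hwx : ¬ G.Adj w x := fun h => by grind [huniq w h.symm]
        refine hasFourImages_of_injOn trivial hfw (hdeg w hwX.1 hwX.2.1 hwX.2.2) ?_ ?_
        · intro p hp
          have := hp.ne
          refine ⟨trivial, ?_⟩
          unfold mergeInto
          grind
        · intro p q hp hq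
          unfold mergeInto
          grind
    · push Not at hs
      obtain ⟨t, ht⟩ := hex
      refine IsExemptClique.hasFourDenseMinor_of_starMinor ih {x}ᶜ id
        ⟨x, by simp⟩ (isStarMap_id G _)
        (isExemptClique_starMinor (isStarMap_id G _) {y, z} ?_ ?_ ⟨t, ?_⟩ ?_)
      · simpa using ncard_triple_le y y z
      · intro p hp q hq hpq
        refine ⟨p, ?_, q, ?_, rfl, rfl, ?_⟩ <;>
          simp only [Set.mem_insert_iff, Set.mem_singleton_iff, Set.mem_compl_iff] at hp hq ⊢ <;>
          have h₂ := hyz.symm <;> grind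
      · simpa using ht
      · intro w hw hfw hwX
        simp only [Set.mem_insert_iff, Set.mem_singleton_iff, not_or, Set.mem_compl_iff] at hwX hw
        refine hasFourImages_of_injOn hw rfl (hdeg w hw hwX.1 hwX.2) ?_ fun p q _ _ h => h
        intro p hp
        refine ⟨?_, hp.ne'⟩
        rintro rfl
        have := hs w hp.symm
        grind
  have triangle : ∀ x y z : V, G.Adj x y → G.Adj y z → G.Adj x z →
      (∀ w, w ≠ x → w ≠ y → w ≠ z → 4 ≤ (G.neighborSet w).ncard) →
      (∃ w, w ≠ x ∧ w ≠ y ∧ w ≠ z) → HasFourDenseMinor G := by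
    intro x y z hxy hyz hxz hdeg hex
    obtain ⟨t, htx, hty, htz⟩ := hex
    by_cases hx : 4 ≤ (G.neighborSet x).ncard
    · by_cases hy : 4 ≤ (G.neighborSet y).ncard
      · by_cases hz : 4 ≤ (G.neighborSet z).ncard
        · refine ⟨V, inferInstance, G, .refl G, ⟨x⟩, fun w => ?_⟩
          by_cases hwx : w = x
          · rwa [hwx]
          by_cases hwy : w = y
          · rwa [hwy]
          by_cases hwz : w = z
          · rwa [hwz]
          exact hdeg w hwx hwy hwz
        · exact low z x y hxz.symm hxy hyz.symm (fun w h₁ h₂ h₃ => hdeg w h₂ h₃ h₁)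
            ⟨t, htz, htx, hty⟩ hz
      · exact low y x z hxy.symm hxz hyz (fun w h₁ h₂ h₃ => hdeg w h₂ h₁ h₃)
          ⟨t, hty, htx, htz⟩ hy
    · exact low x y z hxy hyz hxz hdeg ⟨t, htx, hty, htz⟩ hx
  have contract : ∀ x s : V, G.Adj x s → (∀ w, G.Adj x w → ¬ G.Adj s w) →
      (∀ w, w ≠ x → w ≠ s → 4 ≤ (G.neighborSet w).ncard) → (∃ w, w ≠ x ∧ w ≠ s) →
      HasFourDenseMinor G := by
    intro x s hxs hcommon hdeg hex
    have hxs' := hxs.ne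
    obtain ⟨t, ht⟩ := hex
    refine IsExemptClique.hasFourDenseMinor_of_starMinor ih Set.univ (mergeInto s x)
      ⟨s, by unfold mergeInto; grind⟩ (isStarMap_mergeInto hxs.symm)
      (isExemptClique_starMinor (isStarMap_mergeInto hxs.symm) {x} (by simp) ?_ ⟨t, ?_⟩ ?_)
    · rintro p rfl q rfl h
      exact absurd rfl h
    · simp only [Set.mem_singleton_iff]
      unfold mergeInto
      grind
    · intro w _ hfw hwX
      rw [Set.mem_singleton_iff] at hwX
      have hws : w ≠ s := by
        rintro rfl
        simp only [mergeInto, if_true] at hfw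
        exact hxs' hfw
      have := hcommon w
      have h₁ := G.adj_comm x w
      have h₂ := G.adj_comm s w
      refine hasFourImages_of_injOn trivial hfw (hdeg w hwX hws) ?_ ?_
      · intro p hp
        have := hp.ne
        refine ⟨trivial, ?_⟩
        unfold mergeInto
        grind
      · intro p q hp hq
        unfold mergeInto
        grind
  have edge : ∀ x s : V, G.Adj x s →
      (∀ w, w ≠ x → w ≠ s → 4 ≤ (G.neighborSet w).ncard) → (∃ w, w ≠ x ∧ w ≠ s) →
      HasFourDenseMinor G := by
    intro x s hxs hdeg hex
    by_cases hc : ∃ w, G.Adj x w ∧ G.Adj s w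
    · obtain ⟨w, hxw, hsw⟩ := hc
      obtain ⟨t, ht⟩ := exists_adj_ne_of_four_le (hdeg w hxw.ne' hsw.ne') x s w
      exact triangle x s w hxs hsw hxw (fun p h₁ h₂ _ => hdeg p h₁ h₂) ⟨t, ht.2⟩
    · push Not at hc
      exact contract x s hxs hc hdeg hex
  obtain ⟨hcard, hclique, ⟨t, ht⟩, hdeg⟩ := hX
  obtain h0 | h1 | h2 | h3 : X.ncard = 0 ∨ X.ncard = 1 ∨ X.ncard = 2 ∨ X.ncard = 3 := by omega
  · rw [Set.ncard_eq_zero] at h0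
    subst h0
    exact ⟨V, inferInstance, G, .refl G, ⟨t⟩, fun w => hdeg w (by simp)⟩
  · obtain ⟨x, rfl⟩ := Set.ncard_eq_one.1 h1
    simp only [Set.mem_singleton_iff] at hdeg ht
    by_cases hs : ∃ s, G.Adj x s
    · obtain ⟨s, hxs⟩ := hs
      obtain ⟨t, ht⟩ := exists_adj_ne_of_four_le (hdeg s hxs.ne') x s s
      exact edge x s hxs (fun w h _ => hdeg w h) ⟨t, by grind⟩
    · push Not at hs
      refine IsExemptClique.hasFourDenseMinor_of_starMinor ih {x}ᶜ id
        ⟨x, by simp⟩ (isStarMap_id G _)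
        (isExemptClique_starMinor (isStarMap_id G _) ∅ (by simp) (by simp) ⟨t, by simpa using ht⟩ ?_)
      intro w hw _ _
      refine hasFourImages_of_injOn hw rfl (hdeg w hw) ?_ fun p q _ _ h => h
      intro p hp
      refine ⟨?_, hp.ne'⟩
      rintro rfl
      exact hs w hp.symm
  · obtain ⟨x, y, hxy, rfl⟩ := Set.ncard_eq_two.1 h2
    simp only [Set.mem_insert_iff, Set.mem_singleton_iff, not_or] at hdeg ht
    exact edge x y (hclique (by simp) (by simp) hxy) (fun w h h' => hdeg w ⟨h, h'⟩) ⟨t, ht⟩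
  · obtain ⟨x, y, z, hxy, hxz, hyz, rfl⟩ := Set.ncard_eq_three.1 h3
    simp only [Set.mem_insert_iff, Set.mem_singleton_iff, not_or] at hdeg ht
    exact triangle x y z (hclique (by simp) (by simp) hxy) (hclique (by simp) (by simp) hyz)
      (hclique (by simp) (by simp) hxz) (fun w h h' h'' => hdeg w ⟨h, h', h''⟩) ⟨t, ht⟩

end Exempt

section Minimal

variable {V : Type}

/-- `G` is minor-minimal among the finite nonempty graphs of minimum degree at least four. -/
def IsMinimalFourDense (G : SimpleGraph V) : Prop :=
  FourDense G ∧ ∀ (W : Type) [Fintype W] (H : SimpleGraph W), IsMinorOf H G → FourDense H →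
    Nonempty (H ≃g G)

theorem IsMinimalFourDense.not_isExemptClique_starMinor [Fintype V] {G : SimpleGraph V}
    (hG : IsMinimalFourDense G) (K : Set V) (f : V → V) (hproper : ∃ x, ¬ (x ∈ K ∧ f x = x))
    (hf : IsStarMap G K f) (X : Set _) : ¬ IsExemptClique (starMinor G K f) X := by
  classical
  intro hX
  obtain ⟨x, hx⟩ := hproper
  obtain ⟨W, hW, H, hH, hd⟩ := hX.hasFourDenseMinor
  obtain ⟨e⟩ := hG.2 W H (hH.trans (starMinor_isMinorOf hf)) hd
  have h₁ := hH.card_le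
  have h₂ := Fintype.card_congr e.toEquiv
  have h₃ := Fintype.card_subtype_lt (p := fun x => x ∈ K ∧ f x = x) hx
  omega

theorem IsMinimalFourDense.common_neighbor_or_twins [Fintype V] {G : SimpleGraph V}
    (hG : IsMinimalFourDense G) {u v : V} (huv : G.Adj u v) :
    (∃ w, G.Adj w u ∧ G.Adj w v ∧ (G.neighborSet w).ncard = 4) ∨
      ((G.neighborSet u).ncard = 4 ∧ (G.neighborSet v).ncard = 4 ∧
        ∀ w, w ≠ u → w ≠ v → (G.Adj u w ↔ G.Adj v w)) := by
  by_contra! hcon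
  obtain ⟨hcommon, htwins⟩ := hcon
  have huv' := huv.ne
  refine hG.not_isExemptClique_starMinor Set.univ (mergeInto u v)
    ⟨u, by unfold mergeInto; grind⟩ (isStarMap_mergeInto huv) _
    (isExemptClique_starMinor (isStarMap_mergeInto huv) ∅ (by simp) (by simp)
      ⟨v, by simp [mergeInto]⟩ ?_)
  intro w _ hfw _
  have hwu : w ≠ u := by
    rintro rfl
    simp only [mergeInto, if_true] at hfw
    exact huv' hfw.symm
  by_cases hwv : w = v
  · subst hwv
    let N := (G.neighborSet u ∪ G.neighborSet w) \ {u, w}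
    refine ⟨N, ?_, ?_, ?_⟩
    · rintro x ⟨hx, hx'⟩
      simp only [Set.mem_insert_iff, Set.mem_singleton_iff, not_or] at hx'
      refine ⟨trivial, by unfold mergeInto; grind, ?_⟩
      obtain hx | hx := hx
      · exact ⟨u, trivial, by simp [mergeInto], hx⟩
      · exact ⟨w, trivial, hfw, hx⟩
    · rintro x ⟨-, hx⟩ y ⟨-, hy⟩
      simp only [Set.mem_insert_iff, Set.mem_singleton_iff, not_or] at hx hy
      unfold mergeInto
      grind
    · by_contra! hlt
      have hu : G.neighborSet u \ {w} ⊆ N := by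
        rintro x ⟨hx, hx'⟩
        refine ⟨Or.inl hx, ?_⟩
        have := hx.ne'
        grind
      have hw : G.neighborSet w \ {u} ⊆ N := by
        rintro x ⟨hx, hx'⟩
        refine ⟨Or.inr hx, ?_⟩
        have := hx.ne'
        grind
      have hcu := Set.ncard_sdiff_singleton_add_one (show w ∈ G.neighborSet u from huv)
      have hcw := Set.ncard_sdiff_singleton_add_one (show u ∈ G.neighborSet w from huv.symm)
      have hu4 := hG.1.2 u
      have hw4 := hG.1.2 w
      have hule := Set.ncard_le_ncard hu
      have hwle := Set.ncard_le_ncard hw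
      have heq : G.neighborSet u \ {w} = G.neighborSet w \ {u} :=
        (Set.eq_of_subset_of_ncard_le hu (by omega)).trans
          (Set.eq_of_subset_of_ncard_le hw (by omega)).symm
      obtain ⟨x, hxu, hxw, hx⟩ := htwins (by omega) (by omega)
      have := Set.ext_iff.1 heq x
      simp only [Set.mem_sdiff, mem_neighborSet, Set.mem_singleton_iff] at this
      grind
  · by_cases hboth : G.Adj w u ∧ G.Adj w v
    · refine ⟨G.neighborSet w \ {u}, ?_, ?_, ?_⟩
      · rintro x ⟨hx, hxu⟩
        refine ⟨trivial, ?_, w, trivial, hfw, hx⟩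
        have := hx.ne'
        unfold mergeInto
        grind
      · rintro x ⟨-, hx⟩ y ⟨-, hy⟩
        unfold mergeInto
        grind
      · have h₁ := Set.ncard_sdiff_singleton_add_one (show u ∈ G.neighborSet w from hboth.1)
        have h₂ := hcommon w hboth.1 hboth.2
        have h₃ := hG.1.2 w
        omega
    · refine hasFourImages_of_injOn trivial hfw (hG.1.2 w) ?_ ?_
      · intro x hx
        have := hx.ne'
        refine ⟨trivial, ?_⟩
        unfold mergeInto
        grind
      · intro x y hx hy
        unfold mergeInto
        grind

theorem exists_connected_set_avoiding (G : SimpleGraph V) {S : Set V} {x : V} (hx : x ∉ S) :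
    ∃ R : Set V, x ∈ R ∧ (∀ w ∈ R, w ∉ S) ∧ (G.induce R).Connected ∧
      ∀ w ∈ R, ∀ y, G.Adj w y → y ∈ R ∨ y ∈ S := by
  let F : Set (Set V) := {T | x ∈ T ∧ (∀ w ∈ T, w ∉ S) ∧ (G.induce T).Connected}
  have hxF : {x} ∈ F := ⟨rfl, by rintro w rfl; exact hx, connected_induce_singleton G x⟩
  refine ⟨⋃₀ F, ⟨{x}, hxF, rfl⟩, ?_, ?_, ?_⟩
  · rintro w ⟨T, hT, hw⟩
    exact hT.2.1 w hw
  · exact induce_sUnion_connected_of_pairwise_not_disjoint ⟨{x}, hxF⟩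
      (fun hs ht => ⟨x, hs.1, ht.1⟩) fun hs => hs.2.2
  · rintro w ⟨T, hT, hw⟩ y hwy
    by_cases hy : y ∈ S
    · exact Or.inr hy
    · refine Or.inl ⟨T ∪ {y}, ⟨Or.inl hT.1, ?_, ?_⟩, Or.inr rfl⟩
      · rintro z (hz | rfl)
        · exact hT.2.1 z hz
        · exact hy
      · exact connected_induce_union hT.2.2.preconnected
          (connected_induce_singleton G y).preconnected hw rfl hwy

/-- In a minimal graph, no set is separated from the rest by the vertices of a path `p q r`
whose ends have a common neighbour elsewhere. -/
theorem IsMinimalFourDense.no_separating_path [Fintype V] {G : SimpleGraph V}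
    (hG : IsMinimalFourDense G) {v p q r : V} {R : Set V} (hR : R.Nonempty)
    (hvp : G.Adj v p) (hvq : v ≠ q) (hvr : G.Adj v r) (hpq : G.Adj p q) (hqr : G.Adj q r)
    (hpr : p ≠ r) (hv : v ∉ R) (hp : p ∉ R) (hq : q ∉ R) (hr : r ∉ R)
    (hclosed : ∀ w ∈ R, ∀ y, G.Adj w y → y ∈ R ∨ y = p ∨ y = q ∨ y = r) : False := by
  have hvp' := hvp.ne
  have hvr' := hvr.ne
  have hpq' := hpq.ne
  have hqr' := hqr.ne
  let K : Set V := {x | x ∈ R ∨ x = v ∨ x = p ∨ x = q ∨ x = r}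
  have hK : ∀ x, x ∈ K ↔ x ∈ R ∨ x = v ∨ x = p ∨ x = q ∨ x = r := fun _ => Iff.rfl
  have hf : IsStarMap G K (mergeInto v p) := by
    intro a ha
    refine ⟨?_, ?_, ?_⟩ <;> simp only [hK] at * <;> unfold mergeInto <;> grind
  obtain ⟨t, ht⟩ := hR
  refine hG.not_isExemptClique_starMinor K (mergeInto v p)
    ⟨v, by unfold mergeInto; grind⟩ hf _
    (isExemptClique_starMinor hf {p, q, r} (ncard_triple_le p q r) ?_ ⟨t, Or.inl ht, ?_⟩ ?_)
  · have hpK : p ∈ K := by simp [hK]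
    have hqK : q ∈ K := by simp [hK]
    have hrK : r ∈ K := by simp [hK]
    have hvK : v ∈ K := by simp [hK]
    have fv : mergeInto v p v = p := by simp [mergeInto]
    have fid : ∀ x, x ≠ v → mergeInto v p x = x := fun x hx => by simp [mergeInto, hx]
    have fp := fid p hvp'.symm
    have fq := fid q hvq.symm
    have fr := fid r hvr'.symm
    rintro x (rfl | rfl | rfl) y (rfl | rfl | rfl) hxy
    · exact absurd rfl hxy
    · exact ⟨_, hpK, _, hqK, fp, fq, hpq⟩
    · exact ⟨_, hvK, _, hrK, fv, fr, hvr⟩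
    · exact ⟨_, hqK, _, hpK, fq, fp, hpq.symm⟩
    · exact absurd rfl hxy
    · exact ⟨_, hqK, _, hrK, fq, fr, hqr⟩
    · exact ⟨_, hrK, _, hvK, fr, fv, hvr.symm⟩
    · exact ⟨_, hrK, _, hqK, fr, fq, hqr.symm⟩
    · exact absurd rfl hxy
  · simp only [Set.mem_insert_iff, Set.mem_singleton_iff]
    unfold mergeInto
    grind
  · intro w hw hfw hwX
    simp only [Set.mem_insert_iff, Set.mem_singleton_iff, not_or] at hwX
    have hwv : w ≠ v := by
      rintro rfl
      simp only [mergeInto, if_true] at hfw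
      exact hvp' hfw.symm
    have hwR : w ∈ R := by grind
    refine hasFourImages_of_injOn hw hfw (hG.1.2 w) ?_ ?_
    · intro x hx
      have h₁ := hclosed w hwR x hx
      have h₂ := hx.ne'
      refine ⟨by rw [hK]; grind, ?_⟩
      unfold mergeInto
      grind
    · intro x y hx hy
      have h₁ := hclosed w hwR x hx
      have h₂ := hclosed w hwR y hy
      unfold mergeInto
      grind

end Minimal

section SmallMinors

variable {V : Type} {G : SimpleGraph V}

theorem isMinorOf_top_five {v a b c : V} {R : Set V} (hR : (G.induce R).Connected)
    (hva : G.Adj v a) (hvb : G.Adj v b) (hvc : G.Adj v c) (hab : G.Adj a b) (hac : G.Adj a c)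
    (hbc : G.Adj b c) (hv : v ∉ R) (ha : a ∉ R) (hb : b ∉ R) (hc : c ∉ R)
    (hvR : ∃ x ∈ R, G.Adj v x) (haR : ∃ x ∈ R, G.Adj a x) (hbR : ∃ x ∈ R, G.Adj b x)
    (hcR : ∃ x ∈ R, G.Adj c x) : IsMinorOf (⊤ : SimpleGraph (Fin 5)) G := by
  let B : Fin 5 → Set V := ![{v}, {a}, {b}, {c}, R]
  have hlt : ∀ i j : Fin 5, i < j → Disjoint (B i) (B j) ∧ ∃ x ∈ B i, ∃ y ∈ B j, G.Adj x y := by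
    have h₁ := hva.ne
    have h₂ := hvb.ne
    have h₃ := hvc.ne
    have h₄ := hab.ne
    have h₅ := hac.ne
    have h₆ := hbc.ne
    intro i j hij
    fin_cases i <;> fin_cases j <;> first
      | exact absurd hij (by decide)
      | simp only [B]; simp_all
  refine ⟨B, fun i => ?_, fun i j hij => ?_, fun i => ?_, fun i j hij => ?_⟩
  · obtain ⟨x, hx, -⟩ := hvR
    fin_cases i <;> first | exact ⟨_, rfl⟩ | exact ⟨x, hx⟩
  · obtain h | h := lt_or_gt_of_ne hij
    · exact (hlt i j h).1
    · exact (hlt j i h).1.symm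
  · fin_cases i <;> first | exact hR | exact connected_induce_singleton G _
  · obtain h | h := lt_or_gt_of_ne hij.ne
    · exact (hlt i j h).2
    · obtain ⟨x, hx, y, hy, hxy⟩ := (hlt j i h).2
      exact ⟨y, hy, x, hx, hxy.symm⟩

theorem isMinorOf_octahedron {v a b c d : V} {R : Set V} (hR : (G.induce R).Connected)
    (hva : G.Adj v a) (hvb : G.Adj v b) (hvc : G.Adj v c) (hvd : G.Adj v d) (hab : G.Adj a b)
    (hbc : G.Adj b c) (hcd : G.Adj c d) (hda : G.Adj d a) (hac : a ≠ c) (hbd : b ≠ d)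
    (hv : v ∉ R) (ha : a ∉ R) (hb : b ∉ R) (hc : c ∉ R) (hd : d ∉ R)
    (haR : ∃ x ∈ R, G.Adj a x) (hbR : ∃ x ∈ R, G.Adj b x)
    (hcR : ∃ x ∈ R, G.Adj c x) (hdR : ∃ x ∈ R, G.Adj d x) :
    IsMinorOf (completeMultipartiteGraph (fun _ : Fin 3 => Fin 2)) G := by
  let B : Fin 3 → Fin 2 → Set V := ![![{v}, R], ![{a}, {c}], ![{b}, {d}]]
  have hdisj : ∀ i k j l, (i, k) ≠ (j, l) → Disjoint (B i k) (B j l) := by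
    have h₁ := hva.ne
    have h₂ := hvb.ne
    have h₃ := hvc.ne
    have h₄ := hab.ne
    have h₅ := hvd.ne
    have h₆ := hbc.ne
    have h₇ := hcd.ne
    have h₈ := hda.ne
    intro i k j l hij
    fin_cases i <;> fin_cases k <;> fin_cases j <;> fin_cases l <;> first
      | exact absurd rfl hij
      | simp only [B]; simp_all [eq_comm]
  have hadj : ∀ i k j l, i < j → ∃ x ∈ B i k, ∃ y ∈ B j l, G.Adj x y := by
    have h₁ : ∀ {z}, (∃ x ∈ R, G.Adj z x) → ∃ x ∈ R, G.Adj x z :=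
      fun ⟨x, hx, h⟩ => ⟨x, hx, h.symm⟩
    have h₂ := h₁ haR
    have h₃ := h₁ hbR
    have h₄ := h₁ hcR
    have h₅ := h₁ hdR
    have h₆ := hda.symm
    have h₇ := hbc.symm
    intro i k j l hij
    fin_cases i <;> fin_cases j <;> first
      | exact absurd hij (by decide)
      | fin_cases k <;> fin_cases l <;> simp only [B] <;> simp_all
  refine ⟨fun x => B x.1 x.2, ?_, ?_, ?_, ?_⟩
  · rintro ⟨i, k⟩
    obtain ⟨x, hx, -⟩ := haR
    fin_cases i <;> fin_cases k <;> first | exact ⟨_, rfl⟩ | exact ⟨x, hx⟩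
  · rintro ⟨i, k⟩ ⟨j, l⟩ hij
    refine hdisj _ _ _ _ fun h => hij ?_
    simp_all
  · rintro ⟨i, k⟩
    fin_cases i <;> fin_cases k <;> first | exact hR | exact connected_induce_singleton G _
  · rintro ⟨i, k⟩ ⟨j, l⟩ hij
    obtain h | h := lt_or_gt_of_ne (show i ≠ j from hij)
    · exact hadj i k j l h
    · obtain ⟨x, hx, y, hy, hxy⟩ := hadj j l i k h
      exact ⟨y, hy, x, hx, hxy.symm⟩

end SmallMinors

section Neighborhood

variable {V : Type} {G : SimpleGraph V}

/-- The vertex `v` has exactly the four neighbours `a`, `b`, `c`, `d`. -/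
structure IsNbhd (G : SimpleGraph V) (v a b c d : V) : Prop where
  adj_iff : ∀ x, G.Adj v x ↔ x = a ∨ x = b ∨ x = c ∨ x = d
  ab : a ≠ b
  ac : a ≠ c
  ad : a ≠ d
  bc : b ≠ c
  bd : b ≠ d
  cd : c ≠ d

theorem exists_isNbhd {v : V} (h : (G.neighborSet v).ncard = 4) : ∃ a b c d, IsNbhd G v a b c d := by
  obtain ⟨a, b, c, d, h₁, h₂, h₃, h₄, h₅, h₆, h⟩ := Set.ncard_eq_four.1 h
  refine ⟨a, b, c, d, fun x => ?_, h₁, h₂, h₃, h₄, h₅, h₆⟩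
  simpa using Set.ext_iff.1 h x

theorem exists_isNbhd_of_adj {v a b c : V} (h : (G.neighborSet v).ncard = 4) (ha : G.Adj v a)
    (hb : G.Adj v b) (hc : G.Adj v c) (hab : a ≠ b) (hac : a ≠ c) (hbc : b ≠ c) :
    ∃ d, IsNbhd G v a b c d := by
  obtain ⟨d, hd, hda, hdb, hdc⟩ := exists_adj_ne_of_four_le h.ge a b c
  refine ⟨d, fun x => ?_, hab, hac, hda.symm, hbc, hdb.symm, hdc.symm⟩
  have h4 : ({a, b, c, d} : Set V).ncard = 4 :=
    Set.ncard_eq_four.2 ⟨a, b, c, d, hab, hac, hda.symm, hbc, hdb.symm, hdc.symm, rfl⟩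
  have hsub : ({a, b, c, d} : Set V) ⊆ G.neighborSet v := by
    rintro w (rfl | rfl | rfl | rfl) <;> assumption
  have heq := Set.eq_of_subset_of_ncard_le hsub (by omega)
    (Set.finite_of_ncard_ne_zero (by omega))
  simpa using (Set.ext_iff.1 heq x).symm

variable {v a b c d : V}

theorem IsNbhd.rotate (h : IsNbhd G v a b c d) : IsNbhd G v b c d a :=
  ⟨fun x => by rw [h.adj_iff]; tauto, h.bc, h.bd, h.ab.symm, h.cd, h.ac.symm, h.ad.symm⟩

theorem IsNbhd.swap (h : IsNbhd G v a b c d) : IsNbhd G v b a c d :=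
  ⟨fun x => by rw [h.adj_iff]; tauto, h.ab.symm, h.bc, h.bd, h.ac, h.ad, h.cd⟩

theorem IsNbhd.swapMid (h : IsNbhd G v a b c d) : IsNbhd G v a c b d :=
  ⟨fun x => by rw [h.adj_iff]; tauto, h.ac, h.ab, h.ad, h.bc.symm, h.cd, h.bd⟩

theorem IsNbhd.adj (h : IsNbhd G v a b c d) :
    G.Adj v a ∧ G.Adj v b ∧ G.Adj v c ∧ G.Adj v d := by
  simp [h.adj_iff]

/-- A vertex outside the closed neighbourhood of `v` lies in a connected set whose outside
neighbours are all neighbours of `v`. -/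
theorem IsNbhd.exists_connected_set (h : IsNbhd G v a b c d) {x : V} (hxv : x ≠ v)
    (hx : ¬ G.Adj v x) :
    ∃ R : Set V, x ∈ R ∧ (G.induce R).Connected ∧ v ∉ R ∧ a ∉ R ∧ b ∉ R ∧ c ∉ R ∧ d ∉ R ∧
      ∀ w ∈ R, ∀ y, G.Adj w y → y ∈ R ∨ y = a ∨ y = b ∨ y = c ∨ y = d := by
  obtain ⟨R, hxR, hRS, hconn, hclosed⟩ := exists_connected_set_avoiding G
    (S := insert v (G.neighborSet v)) (x := x) (by simp [hxv, hx])
  obtain ⟨hva, hvb, hvc, hvd⟩ := h.adj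
  have hv : v ∉ R := fun hR => hRS v hR (Or.inl rfl)
  have hvR : ∀ y, G.Adj v y → y ∉ R := fun y hy hR => hRS y hR (Or.inr hy)
  refine ⟨R, hxR, hconn, hv, hvR a hva, hvR b hvb, hvR c hvc, hvR d hvd, fun w hw y hwy => ?_⟩
  obtain hy | rfl | hy := hclosed w hw y hwy
  · exact Or.inl hy
  · exact absurd hw (hvR w hwy.symm)
  · exact Or.inr ((h.adj_iff y).1 hy)

theorem IsMinimalFourDense.exists_common_neighbor [Fintype V] (hG : IsMinimalFourDense G)
    {u v : V} (huv : G.Adj u v) : ∃ w, G.Adj w u ∧ G.Adj w v := by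
  obtain ⟨w, hu, hv, -⟩ | ⟨-, -, h⟩ := hG.common_neighbor_or_twins huv
  · exact ⟨w, hu, hv⟩
  · obtain ⟨t, ht, htv, -⟩ := exists_adj_ne_of_four_le (hG.1.2 u) v v v
    exact ⟨t, ht.symm, ((h t ht.ne' htv).1 ht).symm⟩

theorem IsMinimalFourDense.ncard_eq_four_of_unique [Fintype V] (hG : IsMinimalFourDense G)
    {u v w : V} (huv : G.Adj u v) (hw : ∀ x, G.Adj x u → G.Adj x v → x = w) :
    (G.neighborSet w).ncard = 4 := by
  obtain ⟨x, hu, hv, hx⟩ | ⟨-, -, h⟩ := hG.common_neighbor_or_twins huv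
  · rwa [← hw x hu hv]
  · obtain ⟨t, ht, htv, htw, -⟩ := exists_adj_ne_of_four_le (hG.1.2 u) v w v
    exact absurd (hw t ht.symm ((h t ht.ne' htv).1 ht).symm) htw

theorem IsMinimalFourDense.not_isNbhd_cycle [Fintype V] (hG : IsMinimalFourDense G)
    (hK : ¬ IsMinorOf (⊤ : SimpleGraph (Fin 5)) G)
    (hO : ¬ IsMinorOf (completeMultipartiteGraph (fun _ : Fin 3 => Fin 2)) G)
    (h : IsNbhd G v a b c d) (hab : G.Adj a b) (hbc : G.Adj b c) (hcd : G.Adj c d)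
    (hda : G.Adj d a) : False := by
  obtain ⟨hva, hvb, hvc, hvd⟩ := h.adj
  have key : ∀ {a b c d : V}, IsNbhd G v a b c d → G.Adj a b → G.Adj b c → G.Adj c d →
      G.Adj d a → G.Adj a c := by
    intro a b c d h hab hbc hcd hda
    by_contra hac
    obtain ⟨hva, hvb, hvc, hvd⟩ := h.adj
    obtain ⟨x, hax, hxv, hxb, hxd⟩ := exists_adj_ne_of_four_le (hG.1.2 a) v b d
    have hvx : ¬ G.Adj v x := fun hvx => by
      obtain rfl | rfl | rfl | rfl := (h.adj_iff x).1 hvx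
      exacts [hax.ne rfl, hxb rfl, hac hax, hxd rfl]
    obtain ⟨R, hxR, hconn, hv, ha, hb, hc, hd, hclosed⟩ := h.exists_connected_set hxv hvx
    have sub : ∀ {z p q r}, (∀ y, (y = a ∨ y = b ∨ y = c ∨ y = d) → y = z ∨ y = p ∨ y = q ∨ y = r) →
        G.Adj v p → G.Adj v q → G.Adj v r → G.Adj p q → G.Adj q r → p ≠ r → p ∉ R → q ∉ R →
        r ∉ R → ∃ x ∈ R, G.Adj z x := by
      intro z p q r hall hvp hvq hvr hpq hqr hpr hp hq hr
      by_contra! hz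
      refine hG.no_separating_path ⟨x, hxR⟩ hvp hvq.ne hvr hpq hqr hpr hv hp hq hr ?_
      intro w hw y hwy
      obtain h₁ | h₁ := hclosed w hw y hwy
      · exact Or.inl h₁
      · obtain rfl | h₂ := hall y h₁
        · exact absurd hwy.symm (hz w hw)
        · exact Or.inr h₂
    refine hO (isMinorOf_octahedron hconn hva hvb hvc hvd hab hbc hcd hda h.ac h.bd hv ha hb hc hd
      ⟨x, hxR, hax⟩ ?_ ?_ ?_)
    · exact sub (by tauto) hvc hvd hva hcd hda h.ac.symm hc hd ha
    · exact sub (by tauto) hvd hva hvb hda hab h.bd.symm hd ha hb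
    · exact sub (by tauto) hva hvb hvc hab hbc h.ac ha hb hc
  have hac := key h hab hbc hcd hda
  have hbd := key h.rotate hbc hcd hda hab
  exact hK (isMinorOf_top_five (connected_induce_singleton G d) hva hvb hvc hab hac hbc hvd.ne
    h.ad h.bd h.cd ⟨d, rfl, hvd⟩ ⟨d, rfl, hda.symm⟩ ⟨d, rfl, hbd⟩ ⟨d, rfl, hcd⟩)

theorem IsMinimalFourDense.not_isNbhd_paw [Fintype V] (hG : IsMinimalFourDense G)
    (hK : ¬ IsMinorOf (⊤ : SimpleGraph (Fin 5)) G)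
    (h : IsNbhd G v a b c d) (hab : G.Adj a b) (hbc : G.Adj b c) (hac : G.Adj a c)
    (hcd : G.Adj c d) (had : ¬ G.Adj a d) (hbd : ¬ G.Adj b d) : False := by
  obtain ⟨hva, hvb, hvc, hvd⟩ := h.adj
  obtain ⟨x, hdx, hxv, hxc, -⟩ := exists_adj_ne_of_four_le (hG.1.2 d) v c c
  have hvx : ¬ G.Adj v x := fun hvx => by
    obtain rfl | rfl | rfl | rfl := (h.adj_iff x).1 hvx
    exacts [had hdx.symm, hbd hdx.symm, hxc rfl, hdx.ne rfl]
  obtain ⟨R, hxR, hconn, hv, ha, hb, hc, hd, hclosed⟩ := h.exists_connected_set hxv hvx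
  have haR : ∃ x ∈ R, G.Adj a x := by
    by_contra! hz
    refine hG.no_separating_path ⟨x, hxR⟩ hvb hvc.ne hvd hbc hcd h.bd hv hb hc hd ?_
    intro w hw y hwy
    obtain h₁ | rfl | h₁ := hclosed w hw y hwy
    · exact Or.inl h₁
    · exact absurd hwy.symm (hz w hw)
    · exact Or.inr h₁
  have hbR : ∃ x ∈ R, G.Adj b x := by
    by_contra! hz
    refine hG.no_separating_path ⟨x, hxR⟩ hva hvc.ne hvd hac hcd h.ad hv ha hc hd ?_
    intro w hw y hwy
    obtain h₁ | rfl | rfl | h₁ := hclosed w hw y hwy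
    · exact Or.inl h₁
    · exact Or.inr (Or.inl rfl)
    · exact absurd hwy.symm (hz w hw)
    · exact Or.inr (Or.inr h₁)
  refine hK (isMinorOf_top_five (R := R ∪ {d})
    (connected_induce_union hconn.preconnected (connected_induce_singleton G d).preconnected hxR rfl
      hdx.symm) hva hvb hvc hab hac hbc ?_ ?_ ?_ ?_
    ⟨d, Or.inr rfl, hvd⟩ ?_ ?_ ⟨d, Or.inr rfl, hcd⟩)
  · simp [hv, hvd.ne]
  · simp [ha, h.ad]
  · simp [hb, h.bd]
  · simp [hc, h.cd]
  · obtain ⟨y, hy, hay⟩ := haR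
    exact ⟨y, Or.inl hy, hay⟩
  · obtain ⟨y, hy, hby⟩ := hbR
    exact ⟨y, Or.inl hy, hby⟩

end Neighborhood

section Classification

variable {V : Type} [Fintype V] {G : SimpleGraph V} {v a b c d : V}

theorem IsMinimalFourDense.not_isNbhd_star (hG : IsMinimalFourDense G) (h : IsNbhd G v a b c d)
    (hab : G.Adj a b) (hac : G.Adj a c) (had : G.Adj a d) (hbc : ¬ G.Adj b c)
    (hbd : ¬ G.Adj b d) (hcd : ¬ G.Adj c d) : False := by
  obtain ⟨hva, hvb, hvc, hvd⟩ := h.adj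
  obtain ⟨hv, hab', hac', had', hbc', hbd', hcd'⟩ := h
  have ha4 : (G.neighborSet a).ncard = 4 := by
    refine hG.ncard_eq_four_of_unique hvb fun x hxv hxb => ?_
    have h₁ := (hv x).1 hxv.symm
    have h₂ := hxb.ne
    have h₃ := hxb.symm
    grind
  obtain ⟨e, he⟩ := exists_isNbhd_of_adj ha4 hva.symm hab hac hvb.ne hvc.ne hbc'
  have hde : d = e := by
    have h₁ := (he.adj_iff d).1 had
    have h₂ := hvd.ne
    grind
  subst hde
  have ha := he.adj_iff
  have hva' := hva.ne
  have hvb' := hvb.ne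
  have hvc' := hvc.ne
  have hvd' := hvd.ne
  obtain ⟨t, hbt, htv, hta, -⟩ := exists_adj_ne_of_four_le (hG.1.2 b) v a a
  have hbt' := hbt.ne
  let f : V → V := mergeInto v b ∘ mergeInto a c
  have fv : f v = b := by simp [f, mergeInto, hva']
  have fa : f a = c := by simp [f, mergeInto, hvc'.symm]
  have fid : ∀ x, x ≠ v → x ≠ a → f x = x := fun x h₁ h₂ => by simp [f, mergeInto, h₁, h₂]
  have hf : IsStarMap G Set.univ f := fun x _ => by
    refine ⟨trivial, ?_⟩
    by_cases h₁ : x = v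
    · subst h₁
      rw [fv, fid b hvb'.symm hab'.symm]
      exact ⟨rfl, Or.inr hvb⟩
    by_cases h₂ : x = a
    · subst h₂
      rw [fa, fid c hvc'.symm hac'.symm]
      exact ⟨rfl, Or.inr hac⟩
    rw [fid x h₁ h₂, fid x h₁ h₂]
    exact ⟨rfl, Or.inl rfl⟩
  have fb := fid b hvb'.symm hab'.symm
  have fc := fid c hvc'.symm hac'.symm
  have fd := fid d hvd'.symm had'.symm
  refine hG.not_isExemptClique_starMinor Set.univ f ⟨v, by grind⟩ hf _
    (isExemptClique_starMinor hf {b, c, d} (ncard_triple_le b c d) ?_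
      ⟨t, trivial, fid t htv hta, ?_⟩ ?_)
  · rintro x (rfl | rfl | rfl) y (rfl | rfl | rfl) hxy
    · exact absurd rfl hxy
    · exact ⟨_, trivial, _, trivial, fv, fc, hvc⟩
    · exact ⟨_, trivial, _, trivial, fv, fd, hvd⟩
    · exact ⟨_, trivial, _, trivial, fc, fv, hvc.symm⟩
    · exact absurd rfl hxy
    · exact ⟨_, trivial, _, trivial, fa, fd, had⟩
    · exact ⟨_, trivial, _, trivial, fd, fv, hvd.symm⟩
    · exact ⟨_, trivial, _, trivial, fd, fa, had.symm⟩
    · exact absurd rfl hxy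
  · simp only [Set.mem_insert_iff, Set.mem_singleton_iff]
    grind
  · intro w _ hfw hwX
    simp only [Set.mem_insert_iff, Set.mem_singleton_iff, not_or] at hwX
    have hwv : ¬ G.Adj w v := fun hw => by grind [(hv w).1 hw.symm]
    have hwa : ¬ G.Adj w a := fun hw => by grind [(ha w).1 hw.symm]
    have hfix : ∀ x, G.Adj w x → f x = x := fun x hx => fid x (by grind) (by grind)
    refine hasFourImages_of_injOn trivial hfw (hG.1.2 w) ?_ ?_
    · intro x hx
      rw [hfix x hx]
      exact ⟨trivial, hx.ne'⟩
    · intro x y hx hy hxy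
      rwa [hfix x hx, hfix y hy] at hxy

theorem IsMinimalFourDense.not_isNbhd_path (hG : IsMinimalFourDense G) (h : IsNbhd G v a b c d)
    (hab : G.Adj a b) (hbc : G.Adj b c) (hcd : G.Adj c d) (hac : ¬ G.Adj a c)
    (had : ¬ G.Adj a d) (hbd : ¬ G.Adj b d) : False := by
  obtain ⟨hva, hvb, hvc, hvd⟩ := h.adj
  obtain ⟨hv, hab', hac', had', hbc', hbd', hcd'⟩ := h
  have hva' := hva.ne
  have hvb' := hvb.ne
  have hvc' := hvc.ne
  have hvd' := hvd.ne
  have hb4 : (G.neighborSet b).ncard = 4 := by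
    refine hG.ncard_eq_four_of_unique hva fun x hxv hxa => ?_
    have h₁ := (hv x).1 hxv.symm
    have h₂ := hxa.ne
    have h₃ := hxa.symm
    grind
  have hc4 : (G.neighborSet c).ncard = 4 := by
    refine hG.ncard_eq_four_of_unique hvd fun x hxv hxd => ?_
    have h₁ := (hv x).1 hxv.symm
    have h₂ := hxd.ne
    have h₃ := hxd.symm
    grind
  obtain ⟨e, he⟩ := exists_isNbhd_of_adj hb4 hvb.symm hab.symm hbc hva' hvc' hac'
  have hbe : G.Adj b e := he.adj.2.2.2
  have hbe' := hbe.ne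
  obtain ⟨hb, -, -, hve', -, hae', hce'⟩ := he
  have hde' : d ≠ e := by rintro rfl; exact hbd hbe
  have hve : ¬ G.Adj v e := fun h => by grind [(hv e).1 h]
  by_cases hce : G.Adj c e
  · obtain ⟨e', he⟩ := exists_isNbhd_of_adj hc4 hvc.symm hbc.symm hcd hvb' hvd' hbd'
    have hee' : e = e' := by grind [(he.adj_iff e).1 hce]
    subst hee'
    have hc := he.adj_iff
    obtain ⟨t, hat, htv, htb, hte⟩ := exists_adj_ne_of_four_le (hG.1.2 a) v b e
    have hat' := hat.ne
    let f : V → V := mergeInto v a ∘ mergeInto b e ∘ mergeInto c d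
    have fv : f v = a := by simp [f, mergeInto, hvb', hvc']
    have fb : f b = e := by simp [f, mergeInto, hbc', hve'.symm]
    have fc : f c = d := by simp [f, mergeInto, hbd'.symm, hvd'.symm]
    have fid : ∀ x, x ≠ v → x ≠ b → x ≠ c → f x = x := fun x h₁ h₂ h₃ => by
      simp [f, mergeInto, h₁, h₂, h₃]
    have fa := fid a hva'.symm hab' hac'
    have fd := fid d hvd'.symm hbd'.symm hcd'.symm
    have fe := fid e hve'.symm hbe'.symm hce'.symm
    have hf : IsStarMap G Set.univ f := fun x _ => by
      refine ⟨trivial, ?_⟩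
      by_cases h₁ : x = v
      · subst h₁
        rw [fv, fa]
        exact ⟨rfl, Or.inr hva⟩
      by_cases h₂ : x = b
      · subst h₂
        rw [fb, fe]
        exact ⟨rfl, Or.inr hbe⟩
      by_cases h₃ : x = c
      · subst h₃
        rw [fc, fd]
        exact ⟨rfl, Or.inr hcd⟩
      rw [fid x h₁ h₂ h₃, fid x h₁ h₂ h₃]
      exact ⟨rfl, Or.inl rfl⟩
    refine hG.not_isExemptClique_starMinor Set.univ f ⟨v, by grind⟩ hf _
      (isExemptClique_starMinor hf {a, d, e} (ncard_triple_le a d e) ?_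
        ⟨t, trivial, fid t htv htb (by grind), ?_⟩ ?_)
    · rintro x (rfl | rfl | rfl) y (rfl | rfl | rfl) hxy
      · exact absurd rfl hxy
      · exact ⟨_, trivial, _, trivial, fv, fd, hvd⟩
      · exact ⟨_, trivial, _, trivial, fa, fb, hab⟩
      · exact ⟨_, trivial, _, trivial, fd, fv, hvd.symm⟩
      · exact absurd rfl hxy
      · exact ⟨_, trivial, _, trivial, fc, fe, hce⟩
      · exact ⟨_, trivial, _, trivial, fb, fa, hab.symm⟩
      · exact ⟨_, trivial, _, trivial, fe, fc, hce.symm⟩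
      · exact absurd rfl hxy
    · simp only [Set.mem_insert_iff, Set.mem_singleton_iff]
      grind
    · intro w _ hfw hwX
      simp only [Set.mem_insert_iff, Set.mem_singleton_iff, not_or] at hwX
      have hwv : ¬ G.Adj w v := fun hw => by grind [(hv w).1 hw.symm]
      have hwb : ¬ G.Adj w b := fun hw => by grind [(hb w).1 hw.symm]
      have hwc : ¬ G.Adj w c := fun hw => by grind [(hc w).1 hw.symm]
      have hfix : ∀ x, G.Adj w x → f x = x := fun x hx => fid x (by grind) (by grind) (by grind)
      refine hasFourImages_of_injOn trivial hfw (hG.1.2 w) ?_ ?_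
      · intro x hx
        rw [hfix x hx]
        exact ⟨trivial, hx.ne'⟩
      · intro x y hx hy hxy
        rwa [hfix x hx, hfix y hy] at hxy
  · have huniq : ∀ x, G.Adj x b → G.Adj x e → x = a := fun x hxb hxe => by
      have h₁ := (hb x).1 hxb.symm
      have h₂ := hxe.ne
      grind
    obtain ⟨x, hxb, hxe⟩ := hG.exists_common_neighbor hbe
    obtain rfl : x = a := huniq x hxb hxe
    obtain ⟨r, hxr, hrv, hrb, hre⟩ := exists_adj_ne_of_four_le (hG.1.2 x) v b e
    obtain ⟨q, hq⟩ := exists_isNbhd_of_adj hc4 hcd hvc.symm hbc.symm hvd'.symm hbd'.symm hvb'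
    obtain ⟨-, -, -, hcq⟩ := hq.adj
    obtain ⟨hc, -, -, hdq', -, hvq', hbq'⟩ := hq
    have hcq' := hcq.ne
    have hxr' := hxr.ne
    let f : V → V := mergeInto c b ∘ mergeInto v x
    have fv : f v = x := by simp [f, mergeInto, hac']
    have fc : f c = b := by simp [f, mergeInto, hvc'.symm]
    have fid : ∀ y, y ≠ v → y ≠ c → f y = y := fun y h₁ h₂ => by simp [f, mergeInto, h₁, h₂]
    have fx := fid x hva'.symm hac'
    have fb := fid b hvb'.symm hbc'
    have fd := fid d hvd'.symm hcd'.symm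
    have fe := fid e hve'.symm hce'.symm
    have fq := fid q hvq'.symm hcq'.symm
    have fr := fid r hrv (by grind)
    have hf : IsStarMap G Set.univ f := fun y _ => by
      refine ⟨trivial, ?_⟩
      by_cases h₁ : y = v
      · subst h₁
        rw [fv, fx]
        exact ⟨rfl, Or.inr hva⟩
      by_cases h₂ : y = c
      · subst h₂
        rw [fc, fb]
        exact ⟨rfl, Or.inr hbc.symm⟩
      rw [fid y h₁ h₂, fid y h₁ h₂]
      exact ⟨rfl, Or.inl rfl⟩
    refine hG.not_isExemptClique_starMinor Set.univ f ⟨v, by grind⟩ hf _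
      (isExemptClique_starMinor hf ∅ (by simp) (by simp) ⟨d, trivial, fd, by simp⟩ ?_)
    intro w _ hfw _
    by_cases hwb : w = b
    · subst hwb
      refine ⟨{q, d, e, x}, ?_, ?_, ?_⟩
      · rintro y (rfl | rfl | rfl | rfl)
        · exact ⟨trivial, by grind, c, trivial, fc, hcq⟩
        · exact ⟨trivial, by grind, c, trivial, fc, hcd⟩
        · exact ⟨trivial, by grind, w, trivial, fb, hbe⟩
        · exact ⟨trivial, by grind, w, trivial, fb, hab.symm⟩
      · rintro y (rfl | rfl | rfl | rfl) z (rfl | rfl | rfl | rfl) <;> simp only [fq, fd, fe, fx] <;>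
          exact fun h => h
      · refine (Set.ncard_eq_four.2 ⟨q, d, e, x, ?_, ?_, ?_, ?_, ?_, ?_, rfl⟩).ge <;>
          grind [G.adj_comm x c]
    by_cases hwx : w = x
    · subst hwx
      refine ⟨{d, e, r, b}, ?_, ?_, ?_⟩
      · rintro y (rfl | rfl | rfl | rfl)
        · exact ⟨trivial, by grind, v, trivial, fv, hvd⟩
        · exact ⟨trivial, by grind, w, trivial, fx, hxe⟩
        · exact ⟨trivial, by grind, w, trivial, fx, hxr⟩
        · exact ⟨trivial, by grind, w, trivial, fx, hab⟩
      · rintro y (rfl | rfl | rfl | rfl) z (rfl | rfl | rfl | rfl) <;> simp only [fr, fd, fe, fb] <;>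
          exact fun h => h
      · refine (Set.ncard_eq_four.2 ⟨d, e, r, b, ?_, ?_, ?_, ?_, ?_, ?_, rfl⟩).ge <;> grind
    have hwv : w ≠ v := by grind
    have hwc : w ≠ c := by grind
    have h₁ : ¬ (G.Adj w b ∧ G.Adj w c) := fun ⟨hb', hc'⟩ => by
      have := (hb w).1 hb'.symm
      have := (hc w).1 hc'.symm
      grind [G.adj_comm x c]
    have h₂ : ¬ (G.Adj w x ∧ G.Adj w v) := fun ⟨hb', hc'⟩ => by
      have := (hv w).1 hc'.symm
      have := hb'.symm
      grind
    refine hasFourImages_of_injOn trivial hfw (hG.1.2 w) ?_ ?_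
    · intro y hy
      have := hy.ne'
      refine ⟨trivial, ?_⟩
      by_cases y = v <;> by_cases y = c <;> grind
    · intro y z hy hz hyz
      by_cases y = v <;> by_cases y = c <;> by_cases z = v <;> by_cases z = c <;> grind

theorem IsMinimalFourDense.exists_adj_of_isNbhd (hG : IsMinimalFourDense G)
    (h : IsNbhd G v a b c d) : G.Adj a b ∨ G.Adj a c ∨ G.Adj a d := by
  obtain ⟨w, hwv, hwa⟩ := hG.exists_common_neighbor h.adj.1
  obtain rfl | rfl | rfl | rfl := (h.adj_iff w).1 hwv.symm
  · exact absurd rfl hwa.ne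
  · exact Or.inl hwa.symm
  · exact Or.inr (Or.inl hwa.symm)
  · exact Or.inr (Or.inr hwa.symm)

theorem IsMinimalFourDense.not_isNbhd_triangle (hG : IsMinimalFourDense G)
    (hK : ¬ IsMinorOf (⊤ : SimpleGraph (Fin 5)) G)
    (hO : ¬ IsMinorOf (completeMultipartiteGraph (fun _ : Fin 3 => Fin 2)) G)
    (h : IsNbhd G v a b c d) (hab : G.Adj a b) (hbc : G.Adj b c) (hac : G.Adj a c) : False := by
  have key : ∀ {a b c}, IsNbhd G v a b c d → G.Adj a b → G.Adj b c → G.Adj a c →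
      G.Adj c d → False := by
    intro a b c h hab hbc hac hcd
    by_cases had : G.Adj a d
    · exact hG.not_isNbhd_cycle hK hO h hab hbc hcd had.symm
    by_cases hbd : G.Adj b d
    · exact hG.not_isNbhd_cycle hK hO h.swap hab.symm hac hcd hbd.symm
    exact hG.not_isNbhd_paw hK h hab hbc hac hcd had hbd
  obtain hd | hd | hd := hG.exists_adj_of_isNbhd h.rotate.rotate.rotate
  · exact key h.swap.swapMid hbc hac.symm hab.symm hd.symm
  · exact key h.swapMid hac hbc.symm hab hd.symm
  · exact key h hab hbc hac hd.symm

theorem IsMinimalFourDense.not_isNbhd_three_edges (hG : IsMinimalFourDense G)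
    (hK : ¬ IsMinorOf (⊤ : SimpleGraph (Fin 5)) G)
    (hO : ¬ IsMinorOf (completeMultipartiteGraph (fun _ : Fin 3 => Fin 2)) G)
    (h : IsNbhd G v a b c d) (hab : G.Adj a b) (hbc : G.Adj b c) (hcd : G.Adj c d) : False := by
  by_cases hac : G.Adj a c
  · exact hG.not_isNbhd_triangle hK hO h hab hbc hac
  by_cases hbd : G.Adj b d
  · exact hG.not_isNbhd_triangle hK hO h.rotate hbc hcd hbd
  by_cases had : G.Adj a d
  · exact hG.not_isNbhd_cycle hK hO h hab hbc hcd had.symm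
  exact hG.not_isNbhd_path h hab hbc hcd hac had hbd

theorem IsMinimalFourDense.adj_of_isNbhd (hG : IsMinimalFourDense G)
    (hK : ¬ IsMinorOf (⊤ : SimpleGraph (Fin 5)) G)
    (hO : ¬ IsMinorOf (completeMultipartiteGraph (fun _ : Fin 3 => Fin 2)) G)
    (h : IsNbhd G v a b c d) (hab : G.Adj a b) : G.Adj c d := by
  by_contra hcd
  have star : ∀ {a b}, IsNbhd G v a b c d → G.Adj a b → G.Adj a c → G.Adj a d → False := by
    intro a b h hab hac had
    refine hG.not_isNbhd_star h hab hac had (fun hbc => ?_) (fun hbd => ?_) hcd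
    · exact hG.not_isNbhd_triangle hK hO h hab hbc hac
    · exact hG.not_isNbhd_triangle hK hO h.rotate.rotate.swap.rotate.rotate hab hbd had
  obtain hc | hc | hc := hG.exists_adj_of_isNbhd h.rotate.rotate
  · exact hcd hc
  · obtain hd | hd | hd := hG.exists_adj_of_isNbhd h.rotate.rotate.rotate
    · exact star h hab hc.symm hd.symm
    · exact hG.not_isNbhd_three_edges hK hO h.swapMid.swap hc hab hd.symm
    · exact hcd hd.symm
  · obtain hd | hd | hd := hG.exists_adj_of_isNbhd h.rotate.rotate.rotate
    · exact hG.not_isNbhd_three_edges hK hO h.rotate.rotate.rotate hd hab hc.symm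
    · exact star h.swap hab.symm hc.symm hd.symm
    · exact hcd hd.symm

/-- If `G` has neither small minor, then the neighbourhood of a vertex of degree four induces a
perfect matching. -/
theorem IsMinimalFourDense.exists_isNbhd_matching (hG : IsMinimalFourDense G)
    (hK : ¬ IsMinorOf (⊤ : SimpleGraph (Fin 5)) G)
    (hO : ¬ IsMinorOf (completeMultipartiteGraph (fun _ : Fin 3 => Fin 2)) G)
    (h : (G.neighborSet v).ncard = 4) :
    ∃ a b c d, IsNbhd G v a b c d ∧ G.Adj a b ∧ G.Adj c d ∧ ¬ G.Adj a c ∧ ¬ G.Adj a d ∧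
      ¬ G.Adj b c ∧ ¬ G.Adj b d := by
  have key : ∀ {a b c d}, IsNbhd G v a b c d → G.Adj a b → IsNbhd G v a b c d ∧ G.Adj a b ∧
      G.Adj c d ∧ ¬ G.Adj a c ∧ ¬ G.Adj a d ∧ ¬ G.Adj b c ∧ ¬ G.Adj b d := by
    intro a b c d h hab
    have hcd := hG.adj_of_isNbhd hK hO h hab
    have h' := h.rotate.rotate.swap.rotate.rotate
    exact ⟨h, hab, hcd, fun hac => hG.not_isNbhd_three_edges hK hO h.swap hab.symm hac hcd,
      fun had => hG.not_isNbhd_three_edges hK hO h'.swap hab.symm had hcd.symm,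
      fun hbc => hG.not_isNbhd_three_edges hK hO h hab hbc hcd,
      fun hbd => hG.not_isNbhd_three_edges hK hO h' hab hbd hcd.symm⟩
  obtain ⟨a, b, c, d, h⟩ := exists_isNbhd h
  obtain hab | hac | had := hG.exists_adj_of_isNbhd h
  · exact ⟨_, _, _, _, key h hab⟩
  · exact ⟨_, _, _, _, key h.swapMid hac⟩
  · exact ⟨_, _, _, _, key h.rotate.rotate.rotate.swap had⟩

theorem IsMinimalFourDense.common_neighbor_unique (hG : IsMinimalFourDense G)
    (hK : ¬ IsMinorOf (⊤ : SimpleGraph (Fin 5)) G)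
    (hO : ¬ IsMinorOf (completeMultipartiteGraph (fun _ : Fin 3 => Fin 2)) G)
    (h : (G.neighborSet a).ncard = 4) (hab : G.Adj a b) {x y : V} (hax : G.Adj a x)
    (hbx : G.Adj b x) (hay : G.Adj a y) (hby : G.Adj b y) : x = y := by
  obtain ⟨p, q, r, s, ⟨ha, -, -, -, -, -, -⟩, -, -, hpr, hps, hqr, hqs⟩ :=
    hG.exists_isNbhd_matching hK hO h
  have h₁ := hbx.ne
  have h₂ := hby.ne
  have h₃ := G.adj_comm b x
  have h₄ := G.adj_comm b y
  rw [ha] at hab hax hay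
  grind

theorem IsMinimalFourDense.isMinorOf (hG : IsMinimalFourDense G) :
    IsMinorOf (⊤ : SimpleGraph (Fin 5)) G ∨
      IsMinorOf (completeMultipartiteGraph (fun _ : Fin 3 => Fin 2)) G := by
  by_contra! hcon
  obtain ⟨hK, hO⟩ := hcon
  obtain ⟨v, hv4⟩ : ∃ v, (G.neighborSet v).ncard = 4 := by
    obtain ⟨u⟩ := hG.1.1
    obtain ⟨w, huw, -⟩ := exists_adj_ne_of_four_le (hG.1.2 u) u u u
    obtain ⟨x, -, -, hx⟩ | ⟨hx, -⟩ := hG.common_neighbor_or_twins huw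
    · exact ⟨x, hx⟩
    · exact ⟨u, hx⟩
  obtain ⟨a, b, c, d, h, hab, hcd, hac, had, hbc, hbd⟩ := hG.exists_isNbhd_matching hK hO hv4
  obtain ⟨hva, hvb, hvc, hvd⟩ := h.adj
  obtain ⟨hv, hab', hac', had', hbc', hbd', hcd'⟩ := h
  have hva' := hva.ne
  have hvb' := hvb.ne
  have hvc' := hvc.ne
  have hvd' := hvd.ne
  have hab4 : (G.neighborSet a).ncard = 4 := by
    refine hG.ncard_eq_four_of_unique hvb fun x hxv hxb => ?_
    have h₁ := (hv x).1 hxv.symm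
    have h₂ := hxb.ne
    have h₃ := hxb.symm
    grind
  have hcd4 : (G.neighborSet c).ncard = 4 := by
    refine hG.ncard_eq_four_of_unique hvd fun x hxv hxd => ?_
    have h₁ := (hv x).1 hxv.symm
    have h₂ := hxd.ne
    have h₃ := hxd.symm
    grind
  have habv : ∀ x, G.Adj a x → G.Adj b x → x = v := fun x hax hbx =>
    hG.common_neighbor_unique hK hO hab4 hab hax hbx hva.symm hvb.symm
  have hcdv : ∀ x, G.Adj c x → G.Adj d x → x = v := fun x hcx hdx =>
    hG.common_neighbor_unique hK hO hcd4 hcd hcx hdx hvc.symm hvd.symm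
  let f : V → V := mergeInto b a ∘ mergeInto d c
  have fb : f b = a := by simp [f, mergeInto, hbd']
  have fd : f d = c := by simp [f, mergeInto, hbc'.symm]
  have fid : ∀ x, x ≠ b → x ≠ d → f x = x := fun x h₁ h₂ => by simp [f, mergeInto, h₁, h₂]
  have fa := fid a hab' had'
  have fc := fid c hbc'.symm hcd'
  have hf : IsStarMap G {v}ᶜ f := fun x hx => by
    rw [Set.mem_compl_singleton_iff] at hx ⊢
    by_cases h₁ : x = b
    · subst h₁
      rw [fb, fa]
      exact ⟨hva'.symm, rfl, Or.inr hab.symm⟩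
    by_cases h₂ : x = d
    · subst h₂
      rw [fd, fc]
      exact ⟨hvc'.symm, rfl, Or.inr hcd.symm⟩
    rw [fid x h₁ h₂, fid x h₁ h₂]
    exact ⟨hx, rfl, Or.inl rfl⟩
  have merged : ∀ {p q r s}, G.Adj p q → ¬ G.Adj p r → ¬ G.Adj p s → ¬ G.Adj q r → ¬ G.Adj q s →
      (∀ x, G.Adj p x → G.Adj q x → x = v) → p ≠ v → q ≠ v → f p = p → f q = p →
      (∀ x, x ≠ p → x ≠ q → x ≠ r → x ≠ s → f x = x) → HasFourImages G {v}ᶜ f p := by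
    intro p q r s hpq hpr hps hqr hqs hcommon hpv hqv fp fq hfix
    obtain ⟨x₁, hx₁, hx₁v, hx₁q, -⟩ := exists_adj_ne_of_four_le (hG.1.2 p) v q q
    obtain ⟨x₂, hx₂, hx₂v, hx₂q, hx₂₁⟩ := exists_adj_ne_of_four_le (hG.1.2 p) v q x₁
    obtain ⟨y₁, hy₁, hy₁v, hy₁p, -⟩ := exists_adj_ne_of_four_le (hG.1.2 q) v p p
    obtain ⟨y₂, hy₂, hy₂v, hy₂p, hy₂₁⟩ := exists_adj_ne_of_four_le (hG.1.2 q) v p y₁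
    have hp : ∀ x, G.Adj p x → x ≠ q → f x = x := fun x hx h =>
      hfix x hx.ne' h (by grind) (by grind)
    have hq : ∀ x, G.Adj q x → x ≠ p → f x = x := fun x hx h =>
      hfix x h hx.ne' (by grind) (by grind)
    have fx₁ := hp x₁ hx₁ hx₁q
    have fx₂ := hp x₂ hx₂ hx₂q
    have fy₁ := hq y₁ hy₁ hy₁p
    have fy₂ := hq y₂ hy₂ hy₂p
    refine ⟨{x₁, x₂, y₁, y₂}, ?_, ?_, ?_⟩
    · rintro x (rfl | rfl | rfl | rfl)
      · exact ⟨hx₁v, by rw [fx₁]; exact hx₁.ne', p, hpv, fp, hx₁⟩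
      · exact ⟨hx₂v, by rw [fx₂]; exact hx₂.ne', p, hpv, fp, hx₂⟩
      · exact ⟨hy₁v, by rwa [fy₁], q, hqv, fq, hy₁⟩
      · exact ⟨hy₂v, by rwa [fy₂], q, hqv, fq, hy₂⟩
    · rintro y (rfl | rfl | rfl | rfl) z (rfl | rfl | rfl | rfl) <;>
        simp only [fx₁, fx₂, fy₁, fy₂] <;> exact fun h => h
    · refine (Set.ncard_eq_four.2 ⟨x₁, x₂, y₁, y₂, ?_, ?_, ?_, ?_, ?_, ?_, rfl⟩).ge <;> grind
  refine hG.not_isExemptClique_starMinor {v}ᶜ f ⟨v, by simp⟩ hf _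
    (isExemptClique_starMinor hf ∅ (by simp) (by simp) ⟨a, hva'.symm, fa, by simp⟩ ?_)
  intro w hwv hfw _
  rw [Set.mem_compl_singleton_iff] at hwv
  by_cases hwa : w = a
  · subst hwa
    exact merged hab hac had hbc hbd habv hva'.symm hvb'.symm fa fb fun x _ h₁ _ h₂ => fid x h₁ h₂
  by_cases hwc : w = c
  · subst hwc
    exact merged hcd (fun h => hac h.symm) (fun h => hbc h.symm) (fun h => had h.symm)
      (fun h => hbd h.symm) hcdv hvc'.symm hvd'.symm fc fd fun x _ h₁ _ h₂ => fid x h₂ h₁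
  have hwb : w ≠ b := by grind
  have hwd : w ≠ d := by grind
  have h₁ := habv w
  have h₂ := hcdv w
  have h₃ : ¬ G.Adj w v := fun h => by grind [(hv w).1 h.symm]
  have h₄ := G.adj_comm w
  refine hasFourImages_of_injOn hwv hfw (hG.1.2 w) ?_ ?_
  · intro x hx
    refine ⟨by rintro rfl; exact h₃ hx, ?_⟩
    have := hx.ne'
    by_cases x = b <;> by_cases x = d <;> grind
  · intro x y hx hy hxy
    by_cases x = b <;> by_cases x = d <;> by_cases y = b <;> by_cases y = d <;> grind

end Classification

section Converse

variable {W V : Type}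

theorem isMinorOf_of_iso {H : SimpleGraph W} {G : SimpleGraph V} (e : H ≃g G) : IsMinorOf H G :=
  ⟨fun w => {e w}, fun w => ⟨e w, rfl⟩, fun u w h => by simpa using h,
    fun w => connected_induce_singleton G (e w),
    fun u w h => ⟨e u, rfl, e w, rfl, e.map_adj_iff.2 h⟩⟩

theorem FourDense.of_equiv [Finite V] {H : SimpleGraph W} {G : SimpleGraph V} (hH : FourDense H)
    (e : W ≃ V) (he : ∀ u w, H.Adj u w → G.Adj (e u) (e w)) : FourDense G := by
  refine ⟨hH.1.map e, fun v => (hH.2 (e.symm v)).trans ?_⟩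
  rw [← Set.ncard_image_of_injective _ e.injective]
  refine Set.ncard_le_ncard ?_ (Set.toFinite _)
  rintro _ ⟨w, hw, rfl⟩
  simpa using he _ _ hw

theorem MemDHat.of_iso {k : ℕ} {H : SimpleGraph W} {G : SimpleGraph V} (e : G ≃g H)
    (h : MemDHat k H) : MemDHat k G := by
  refine ⟨fun hG => h.1 fun U _ K hK => hG U K (hK.trans (isMinorOf_of_iso e.symm)), ?_⟩
  rintro U _ K ⟨hK, hne⟩
  exact h.2 U K ⟨hK.trans (isMinorOf_of_iso e), fun ⟨e'⟩ => hne ⟨e'.trans e.symm⟩⟩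

theorem IsMinorOf.exists_equiv [Fintype W] [Fintype V] {H : SimpleGraph W} {G : SimpleGraph V}
    (h : IsMinorOf H G) (hcard : Fintype.card V ≤ Fintype.card W) :
    ∃ e : W ≃ V, ∀ u w, H.Adj u w → G.Adj (e u) (e w) := by
  have hle := h.card_le
  obtain ⟨B, hB, hdisj, -, hadj⟩ := h
  choose f hf using hB
  have heq : ∀ u w, f u ∈ B w → u = w := fun u w hu => by
    by_contra hne
    exact Set.disjoint_left.1 (hdisj u w hne) (hf u) hu
  have hbij : Function.Bijective f := by
    rw [Fintype.bijective_iff_injective_and_card]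
    exact ⟨fun u w h => heq u w (h ▸ hf w), by omega⟩
  refine ⟨Equiv.ofBijective f hbij, fun u w huw => ?_⟩
  obtain ⟨x, hx, y, hy, hxy⟩ := hadj huw
  obtain ⟨u', rfl⟩ := hbij.2 x
  obtain ⟨w', rfl⟩ := hbij.2 y
  obtain rfl := heq _ _ hx
  obtain rfl := heq _ _ hy
  exact hxy

theorem memDHat_three_of_regular [Fintype V] [Nonempty V] {G : SimpleGraph V}
    (hreg : ∀ v, (G.neighborSet v).ncard = 4)
    (hcard : ∀ (W : Type) [Fintype W] (H : SimpleGraph W), IsMinorOf H G → FourDense H →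
      Fintype.card V ≤ Fintype.card W) : MemDHat 3 G := by
  constructor
  · intro h
    exact (not_minDegC_le_three_iff G).2 ⟨inferInstance, fun v => (hreg v).ge⟩ (h V G (.refl G))
  · rintro W _ H ⟨hH, hne⟩ U _ K hK
    by_contra hd
    rw [not_minDegC_le_three_iff] at hd
    have h₁ := hcard U K (hK.trans hH) hd
    have h₂ := hK.card_le
    have h₃ := hH.card_le
    obtain ⟨e₁, he₁⟩ := hK.exists_equiv (by omega)
    obtain ⟨e, he⟩ := hH.exists_equiv (by omega)
    have hHd := hd.of_equiv e₁ he₁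
    refine hne ⟨⟨e, fun {u w} => ⟨fun huw => ?_, he u w⟩⟩⟩
    have hsub : e '' H.neighborSet u ⊆ G.neighborSet (e u) := by
      rintro _ ⟨x, hx, rfl⟩
      exact he _ _ hx
    have heq := Set.eq_of_subset_of_ncard_le hsub
      (by rw [Set.ncard_image_of_injective _ e.injective, hreg]; exact hHd.2 u)
    obtain ⟨x, hx, hxw⟩ : e w ∈ e '' H.neighborSet u := by rw [heq]; exact huw
    rwa [← e.injective hxw]

theorem FourDense.five_le_card [Fintype W] {H : SimpleGraph W} (hH : FourDense H) :
    5 ≤ Fintype.card W := by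
  obtain ⟨⟨w⟩, h⟩ := hH
  have h₁ := Set.ncard_insert_of_notMem (s := H.neighborSet w) (a := w) (by simp)
  have h₂ := Set.ncard_le_card (insert w (H.neighborSet w))
  have h₃ := h w
  rw [Nat.card_eq_fintype_card] at h₂
  omega

theorem memDHat_three_top_five : MemDHat 3 (⊤ : SimpleGraph (Fin 5)) := by
  refine memDHat_three_of_regular (fun v => ?_) fun W _ H _ hH => ?_
  · rw [neighborSet_top, Set.ncard_compl]
    simp
  · simpa using hH.five_le_card

theorem octahedron_ncard_neighborSet (v : (_ : Fin 3) × Fin 2) :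
    ((completeMultipartiteGraph (fun _ : Fin 3 => Fin 2)).neighborSet v).ncard = 4 := by
  have : (completeMultipartiteGraph (fun _ : Fin 3 => Fin 2)).neighborSet v =
      ↑(Finset.univ.filter fun w : (_ : Fin 3) × Fin 2 => v.1 ≠ w.1) := by
    ext w
    simp
  rw [this, Set.ncard_coe_finset]
  clear this
  revert v
  decide

theorem FourDense.adj_of_card_eq_five [Fintype W] {H : SimpleGraph W} (hH : FourDense H)
    (hcard : Fintype.card W = 5) {u w : W} (huw : u ≠ w) : H.Adj u w := by
  have hsub : H.neighborSet u ⊆ {u}ᶜ := fun x hx => hx.ne'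
  have h := Set.ncard_compl ({u} : Set W)
  have heq := Set.eq_of_subset_of_ncard_le hsub (by
    rw [h, Set.ncard_singleton, Nat.card_eq_fintype_card, hcard]
    exact hH.2 u)
  have hw : w ∈ ({u}ᶜ : Set W) := huw.symm
  rwa [← heq] at hw

theorem memDHat_three_octahedron :
    MemDHat 3 (completeMultipartiteGraph (fun _ : Fin 3 => Fin 2)) := by
  classical
  refine memDHat_three_of_regular octahedron_ncard_neighborSet fun W _ H hHO hH => ?_
  have h5 := hH.five_le_card
  by_contra! hlt
  have hV : Fintype.card ((_ : Fin 3) × Fin 2) = 6 := by simp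
  have hW : Fintype.card W = 5 := by omega
  obtain ⟨B, hB, hdisj, -, hadj⟩ := hHO
  choose f hf using hB
  have heq : ∀ {u w x}, x ∈ B u → x ∈ B w → u = w := fun {u w x} hu hw => by
    by_contra hne
    exact Set.disjoint_left.1 (hdisj u w hne) hu hw
  have hinj : Function.Injective f := fun u w h => heq (hf u) (h ▸ hf w)
  have hcompl : (Set.range f)ᶜ.ncard = 1 := by
    rw [Set.ncard_compl, Set.ncard_range_of_injective hinj, Nat.card_eq_fintype_card,
      Nat.card_eq_fintype_card, hV, hW]
  obtain ⟨z, hz⟩ := Set.ncard_eq_one.1 hcompl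
  have hbad : ∀ {w x}, x ∈ B w → x ≠ f w → x = z := fun {w x} hx hne => by
    have : x ∈ (Set.range f)ᶜ := by
      rintro ⟨u, rfl⟩
      exact hne (congrArg f (heq (hf u) hx))
    simpa [hz] using this
  obtain ⟨w₀, hw₀⟩ : ∃ w₀, ∀ w ≠ w₀, ∀ x ∈ B w, x = f w := by
    by_cases h : ∃ w₀, z ∈ B w₀
    · obtain ⟨w₀, h₀⟩ := h
      refine ⟨w₀, fun w hw x hx => ?_⟩
      by_contra hne
      exact hw (heq hx (hbad hx hne ▸ h₀))
    · obtain ⟨w₀⟩ := hH.1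
      refine ⟨w₀, fun w _ x hx => ?_⟩
      by_contra hne
      exact h ⟨w, hbad hx hne ▸ hx⟩
  obtain ⟨u, hu, w, hw, huw, hfuw⟩ := Finset.exists_ne_map_eq_of_card_lt_of_maps_to
    (s := Finset.univ.erase w₀) (t := (Finset.univ : Finset (Fin 3))) (f := fun w => (f w).1)
    (by simp [Finset.card_erase_of_mem, hW])
    (fun _ _ => Finset.mem_univ _)
  obtain ⟨x, hx, y, hy, hxy⟩ := hadj (hH.adj_of_card_eq_five hW huw)
  rw [hw₀ u (Finset.ne_of_mem_erase hu) x hx, hw₀ w (Finset.ne_of_mem_erase hw) y hy] at hxy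
  exact hxy hfuw

theorem MemDHat.isMinimalFourDense [Fintype V] {G : SimpleGraph V} (h : MemDHat 3 G) :
    IsMinimalFourDense G := by
  have hiso : ∀ (W : Type) [Fintype W] (H : SimpleGraph W), IsMinorOf H G → FourDense H →
      Nonempty (H ≃g G) := by
    intro W _ H hH hd
    by_contra hne
    exact (not_minDegC_le_three_iff H).2 hd (h.2 W H ⟨hH, hne⟩ W H (.refl H))
  refine ⟨?_, hiso⟩
  have h₁ := h.1
  unfold MemD at h₁
  push Not at h₁
  obtain ⟨W, _, H, hH, hd⟩ := h₁
  have hd' := (not_minDegC_le_three_iff H).1 hd.not_ge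
  obtain ⟨e⟩ := hiso W H hH hd'
  exact hd'.of_equiv e.toEquiv fun u w huw => e.map_adj_iff.2 huw

end Converse

/-- Proposition 2.3: `D̂_3 = {K_5, K_{2,2,2}}`. -/
theorem memDHat_three_iff (V : Type) [Fintype V] (G : SimpleGraph V) :
    MemDHat 3 G ↔
      Nonempty (G ≃g (⊤ : SimpleGraph (Fin 5))) ∨
      Nonempty (G ≃g completeMultipartiteGraph (fun _ : Fin 3 => Fin 2)) := by
  constructor
  · intro h
    have hG := h.isMinimalFourDense
    refine hG.isMinorOf.imp (fun hK => ?_) fun hO => ?_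
    · refine (hG.2 _ _ hK ⟨inferInstance, fun v => ?_⟩).map Iso.symm
      rw [neighborSet_top, Set.ncard_compl]
      simp
    · exact (hG.2 _ _ hO ⟨inferInstance, fun v => (octahedron_ncard_neighborSet v).ge⟩).map Iso.symm
  · rintro (⟨⟨e⟩⟩ | ⟨⟨e⟩⟩)
    · exact memDHat_three_top_five.of_iso e
    · exact memDHat_three_octahedron.of_iso e
end

section
/- Let k ≥ 0 and let G be a graph. Let L(G) be the set of vertices of minimum degree in G and let p = |V(G)| − |L(G)|. Suppose that: the minimum degree of G is k+1; |L(G)| < (4/3)(k + 2 − p); the set V(G) − L(G) is an independent set of G; and every vertex in V(G) − L(G) is adjacent to every vertex of L(G). Then G ∈ D̂_k. -/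
open SimpleGraph

open Finset in
lemma degC_eq_card_filter {V : Type} [Fintype V] (G : SimpleGraph V) (v : V)
    [DecidablePred (G.Adj v)] : degC G v = #{u | G.Adj v u} := by
  unfold degC
  rw [← SimpleGraph.card_neighborFinset_eq_degree]
  congr 1
  ext u
  simp

lemma minDegC_le_degC {V : Type} [Fintype V] (G : SimpleGraph V) (v : V) :
    minDegC G ≤ degC G v := by
  classical
  exact G.minDegree_le_degree v

lemma nonempty_of_minDegC_pos {V : Type} [Fintype V] (G : SimpleGraph V)
    (h : 0 < minDegC G) : Nonempty V := by
  by_contra hV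
  rw [not_nonempty_iff] at hV
  have : minDegC G = 0 := by
    classical
    exact G.minDegree_of_subsingleton
  omega

/-- `φ` assigns vertices of `G` to branch sets of `H` (or to none), realising every vertex and
every edge of `H`. Branch sets need not be connected. -/
structure IsWeakModel {W V : Type} (H : SimpleGraph W) (G : SimpleGraph V)
    (φ : V → Option W) : Prop where
  surj : ∀ w, ∃ v, φ v = some w
  adj : ∀ ⦃u w⦄, H.Adj u w → ∃ a b, φ a = some u ∧ φ b = some w ∧ G.Adj a b

lemma IsMinorOf.exists_isWeakModel {W V : Type} {H : SimpleGraph W} {G : SimpleGraph V}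
    (h : IsMinorOf H G) : ∃ φ, IsWeakModel H G φ := by
  classical
  obtain ⟨B, hne, hdisj, -, hadj⟩ := h
  let φ : V → Option W := fun v => if h : ∃ w, v ∈ B w then some h.choose else none
  have hφ : ∀ v w, v ∈ B w → φ v = some w := by
    intro v w hv
    have h : ∃ w, v ∈ B w := ⟨w, hv⟩
    simp only [φ, dif_pos h, Option.some.injEq]
    by_contra hne
    exact Set.disjoint_left.mp (hdisj _ _ hne) h.choose_spec hv
  refine ⟨φ, fun w => ?_, fun u w huw => ?_⟩
  · obtain ⟨v, hv⟩ := hne w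
    exact ⟨v, hφ v w hv⟩
  · obtain ⟨a, ha, b, hb, hab⟩ := hadj huw
    exact ⟨a, b, hφ a u ha, hφ b w hb, hab⟩

lemma isMinorOf_refl {V : Type} (G : SimpleGraph V) : IsMinorOf G G := by
  refine ⟨fun v => {v}, fun v => Set.singleton_nonempty v, fun u v huv => by simpa using huv,
    fun v => ?_, fun u v huv => ⟨u, rfl, v, rfl, huv⟩⟩
  have : Nonempty ({v} : Set V) := ⟨⟨v, rfl⟩⟩
  exact ⟨SimpleGraph.Preconnected.of_subsingleton⟩

namespace IsWeakModel

variable {U W V : Type} {K : SimpleGraph U} {H : SimpleGraph W} {G : SimpleGraph V}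
  {φ : V → Option W}

lemma comp {ψ : W → Option U} (hψ : IsWeakModel K H ψ) (hφ : IsWeakModel H G φ) :
    IsWeakModel K G (fun v => (φ v).bind ψ) := by
  refine ⟨fun u => ?_, fun u u' huu' => ?_⟩
  · obtain ⟨w, hw⟩ := hψ.surj u
    obtain ⟨v, hv⟩ := hφ.surj w
    exact ⟨v, by simp [hv, hw]⟩
  · obtain ⟨w, w', hw, hw', hadj⟩ := hψ.adj huu'
    obtain ⟨a, b, ha, hb, hab⟩ := hφ.adj hadj
    exact ⟨a, b, by simp [ha, hw], by simp [hb, hw'], hab⟩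

lemma exists_section (hφ : IsWeakModel H G φ) :
    ∃ g : W → V, g.Injective ∧ ∀ w, φ (g w) = some w := by
  choose g hg using hφ.surj
  refine ⟨g, fun u w huw => ?_, hg⟩
  have := hg u
  rw [huw, hg w] at this
  exact (Option.some.inj this).symm

lemma card_le [Fintype W] [Fintype V] (hφ : IsWeakModel H G φ) :
    Fintype.card W ≤ Fintype.card V := by
  obtain ⟨g, hg, -⟩ := hφ.exists_section
  exact Fintype.card_le_of_injective g hg

lemma exists_equiv_of_card_eq [Fintype W] [Fintype V] (hφ : IsWeakModel H G φ)
    (hcard : Fintype.card W = Fintype.card V) :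
    ∃ e : W ≃ V, ∀ u w, H.Adj u w → G.Adj (e u) (e w) := by
  obtain ⟨g, hg, hgφ⟩ := hφ.exists_section
  have hbij : g.Bijective := (Fintype.bijective_iff_injective_and_card g).mpr ⟨hg, hcard⟩
  have huniq : ∀ v w, φ v = some w → v = g w := by
    intro v w hv
    obtain ⟨w', rfl⟩ := hbij.2 v
    rw [hgφ] at hv
    rw [Option.some.inj hv]
  refine ⟨Equiv.ofBijective g hbij, fun u w huw => ?_⟩
  obtain ⟨a, b, ha, hb, hab⟩ := hφ.adj huw
  rw [huniq a u ha, huniq b w hb] at hab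
  exact hab

end IsWeakModel

open Finset in
lemma degC_le_degC_of_equiv {W V : Type} [Fintype W] [Fintype V] {H : SimpleGraph W}
    {G : SimpleGraph V} (e : W ≃ V) (he : ∀ u w, H.Adj u w → G.Adj (e u) (e w)) (w : W) :
    degC H w ≤ degC G (e w) := by
  classical
  rw [degC_eq_card_filter, degC_eq_card_filter]
  refine card_le_card_of_injOn e (fun u hu => ?_) e.injective.injOn
  simpa using he w u (by simpa using hu)

open Finset in
/-- A bijective homomorphism reflects adjacency at a vertex whose degree does not grow. -/
lemma adj_of_degC_le {W V : Type} [Fintype W] [Fintype V] {H : SimpleGraph W}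
    {G : SimpleGraph V} (e : W ≃ V) (he : ∀ u w, H.Adj u w → G.Adj (e u) (e w)) {u w : W}
    (hdeg : degC G (e u) ≤ degC H u) (h : G.Adj (e u) (e w)) : H.Adj u w := by
  classical
  rw [degC_eq_card_filter, degC_eq_card_filter] at hdeg
  have hsub : ({x | H.Adj u x} : Finset W).image e ⊆ ({y | G.Adj (e u) y} : Finset V) := by
    intro y hy
    obtain ⟨x, hx, rfl⟩ := mem_image.mp hy
    simpa using he u x (by simpa using hx)
  have heq := eq_of_subset_of_card_le hsub
    (by rwa [card_image_of_injective _ e.injective])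
  have hw : e w ∈ ({x | H.Adj u x} : Finset W).image e := by
    rw [heq]
    simpa using h
  simpa using hw

open Finset in
lemma card_filter_compl_adj {V : Type} [Fintype V] [DecidableEq V] (G : SimpleGraph V)
    [DecidableRel G.Adj] (v : V) :
    #{u | Gᶜ.Adj v u} + degC G v + 1 = Fintype.card V := by
  have h := G.degree_compl v
  have h2 := G.degree_lt_card_verts v
  have h3 : degC G v = G.degree v := by
    unfold degC
    convert rfl
  have h4 : #{u | Gᶜ.Adj v u} = Gᶜ.degree v := by
    rw [← SimpleGraph.card_neighborFinset_eq_degree]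
    congr 1
    ext u
    simp
  omega

open Finset in
/-- A graph having a set `L` of vertices of degree `d`, all of whose non-neighbours lie in `L`,
with `|L|` more than four times their degree in the complement, has no smaller weak minor of
minimum degree at least `d`. -/
lemma IsWeakModel.card_eq_of_le_minDegC {W V : Type} [Fintype W] [Fintype V]
    {H : SimpleGraph W} {G : SimpleGraph V} {φ : V → Option W} (hφ : IsWeakModel H G φ)
    {d r : ℕ} (L : Finset V) (hr : r + d + 1 = Fintype.card V)
    (hdeg : ∀ v ∈ L, degC G v = d) (hsize : 4 * r < #L)
    (hdom : ∀ v ∈ L, ∀ u ∉ L, G.Adj v u) [Nonempty W] (hH : d ≤ minDegC H) :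
    Fintype.card W = Fintype.card V := by
  classical
  obtain ⟨g, hg, hgφ⟩ := hφ.exists_section
  obtain ⟨t, ht⟩ := Nat.exists_eq_add_of_le hφ.card_le
  have htr : t ≤ r := by
    obtain ⟨w⟩ := ‹Nonempty W›
    have h1 := card_filter_compl_adj H w
    have h2 := minDegC_le_degC H w
    omega
  let S : Finset V := {v | ∃ w, φ v = some w ∧ ∀ v', φ v' = some w → v' = v}
  let X : Finset V := Sᶜ
  have hX : #X ≤ 2 * t := by
    let T : Finset V := univ.image g
    have hT : #T = Fintype.card W := by
      rw [card_image_of_injective _ hg, card_univ]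
    let f : V → V := fun v => (φ v).elim v g
    have hsub : X ⊆ Tᶜ ∪ Tᶜ.image f := by
      intro v hv
      rw [mem_union]
      by_cases hvT : v ∈ T
      · right
        obtain ⟨w, -, rfl⟩ := mem_image.mp hvT
        have : ∃ v', φ v' = some w ∧ v' ≠ g w := by
          by_contra! hcon
          exact (mem_compl.mp hv) (mem_filter.mpr ⟨mem_univ _, w, hgφ w, hcon⟩)
        obtain ⟨v', hv', hne⟩ := this
        refine mem_image.mpr ⟨v', mem_compl.mpr fun hv'T => ?_, by simp [f, hv']⟩
        obtain ⟨w', -, rfl⟩ := mem_image.mp hv'T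
        rw [hgφ] at hv'
        exact hne (by rw [Option.some.inj hv'])
      · exact Or.inl (mem_compl.mpr hvT)
    have h1 := card_le_card hsub
    have h2 := card_union_le Tᶜ (Tᶜ.image f)
    have h3 := card_image_le (s := Tᶜ) (f := f)
    have h4 := card_compl T
    omega
  have hnonadj : ∀ v ∈ L \ X, t ≤ #((L ∩ X).bipartiteAbove Gᶜ.Adj v) := by
    intro v hv
    obtain ⟨hvL, hvX⟩ := mem_sdiff.mp hv
    obtain ⟨w, hw, hwu⟩ := (mem_filter.mp (by simpa [X] using hvX : v ∈ S)).2
    have hsub : ({u | Gᶜ.Adj v u} : Finset V) ⊆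
        (L ∩ X).bipartiteAbove Gᶜ.Adj v ∪ ({x | Hᶜ.Adj w x} : Finset W).image g := by
      intro u hu
      have huv : Gᶜ.Adj v u := (mem_filter.mp hu).2
      rw [mem_union]
      by_cases huX : u ∈ X
      · left
        refine mem_filter.mpr ⟨mem_inter.mpr ⟨?_, huX⟩, huv⟩
        by_contra huL
        exact huv.2 (hdom v hvL u huL)
      · right
        obtain ⟨x, hx, hxu⟩ := (mem_filter.mp (by simpa [X] using huX : u ∈ S)).2
        refine mem_image.mpr ⟨x, mem_filter.mpr ⟨mem_univ _, ?_, fun hwx => ?_⟩, hxu _ (hgφ x)⟩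
        · rintro rfl
          exact huv.1 (hxu v hw)
        · obtain ⟨a, b, ha, hb, hab⟩ := hφ.adj hwx
          rw [hwu a ha, hxu b hb] at hab
          exact huv.2 hab
    have h1 := card_le_card hsub
    have h2 := card_union_le ((L ∩ X).bipartiteAbove Gᶜ.Adj v)
      (({x | Hᶜ.Adj w x} : Finset W).image g)
    have h3 := card_image_le (s := ({x | Hᶜ.Adj w x} : Finset W)) (f := g)
    have h4 := card_filter_compl_adj G v
    have h5 := card_filter_compl_adj H w
    have h6 := minDegC_le_degC H w
    have h7 := hdeg v hvL
    omega
  have hcompl : ∀ x ∈ L ∩ X, #((L \ X).bipartiteBelow Gᶜ.Adj x) ≤ r := by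
    intro x hx
    have h1 : (L \ X).bipartiteBelow Gᶜ.Adj x ⊆ ({u | Gᶜ.Adj x u} : Finset V) := by
      intro u hu
      exact mem_filter.mpr ⟨mem_univ _, (mem_filter.mp hu).2.symm⟩
    have h2 := card_le_card h1
    have h3 := card_filter_compl_adj G x
    have h4 := hdeg x (mem_inter.mp hx).1
    omega
  have hcount := card_mul_le_card_mul Gᶜ.Adj hnonadj hcompl
  have hsplit := card_sdiff_add_card_inter L X
  have hLX : #(L ∩ X) ≤ 2 * t := (card_le_card inter_subset_right).trans hX
  rcases Nat.eq_zero_or_pos t with h0 | hpos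
  · omega
  · exfalso
    nlinarith [Nat.mul_le_mul hLX (Nat.add_le_add_left htr r)]

/-- Lemma 6.5: let `L(G)` be the set of minimum-degree vertices of `G` and
`p = |V(G)| - |L(G)|`. If `G` has minimum degree `k+1`, `|L(G)| < (4/3)(k+2-p)`,
`V(G) - L(G)` is an independent set, and every vertex of `V(G) - L(G)` is
adjacent to every vertex of `L(G)`, then `G ∈ D̂_k`. -/
theorem vida_memDHat (k : ℕ) {V : Type} [Fintype V] (G : SimpleGraph V)
    (L : Set V) (hL : L = {v : V | degC G v = minDegC G})
    (p : ℕ) (hp : p = Fintype.card V - L.ncard)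
    (hmin : minDegC G = k + 1)
    (hsize : 3 * (L.ncard : ℤ) < 4 * ((k : ℤ) + 2 - (p : ℤ)))
    (hind : ∀ u v : V, u ∉ L → v ∉ L → ¬ G.Adj u v)
    (hdom : ∀ u : V, u ∉ L → ∀ v ∈ L, G.Adj u v) :
    MemDHat k G := by
  classical
  have hdeg : ∀ v ∈ L, degC G v = k + 1 := by
    intro v hv
    rw [hL] at hv
    exact hv.trans hmin
  have hLcard : L.ncard = L.toFinset.card := Set.ncard_eq_toFinset_card' L
  have hLV : L.toFinset.card ≤ Fintype.card V := Finset.card_le_univ _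
  obtain ⟨v₀⟩ := nonempty_of_minDegC_pos G (by omega)
  have hv₀ := card_filter_compl_adj G v₀
  have hv₀' := minDegC_le_degC G v₀
  obtain ⟨r, hr⟩ : ∃ r, r + (k + 1) + 1 = Fintype.card V :=
    ⟨Fintype.card V - (k + 2), by omega⟩
  have hcard : ∀ (W : Type) [Fintype W] (H : SimpleGraph W) (φ : V → Option W),
      IsWeakModel H G φ → k + 1 ≤ minDegC H → Fintype.card W = Fintype.card V := by
    intro W _ H φ hφ hH
    have := nonempty_of_minDegC_pos H (by omega)
    exact hφ.card_eq_of_le_minDegC L.toFinset hr (by simpa using hdeg) (by omega)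
      (fun v hv u hu => (hdom u (by simpa using hu) v (by simpa using hv)).symm) hH
  refine ⟨fun h => ?_, fun W _ H hHG U _ K hKH => ?_⟩
  · have := h V G (isMinorOf_refl G)
    omega
  by_contra! hK
  obtain ⟨hminor, hniso⟩ := hHG
  obtain ⟨φ, hφ⟩ := hminor.exists_isWeakModel
  obtain ⟨ψ, hψ⟩ := hKH.exists_isWeakModel
  have hUV := hcard U K _ (hψ.comp hφ) hK
  have hUW := hψ.card_le
  have hWV := hφ.card_le
  obtain ⟨e, he⟩ := hψ.exists_equiv_of_card_eq (by omega)
  obtain ⟨f, hf⟩ := hφ.exists_equiv_of_card_eq (by omega)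
  have hdegH : ∀ w, k + 1 ≤ degC H w := by
    intro w
    have h1 := degC_le_degC_of_equiv e he (e.symm w)
    have h2 := minDegC_le_degC K (e.symm w)
    rw [e.apply_symm_apply] at h1
    omega
  have hreflect : ∀ u w, f u ∈ L → G.Adj (f u) (f w) → H.Adj u w := by
    intro u w hu h
    exact adj_of_degC_le f hf (by rw [hdeg _ hu]; exact hdegH u) h
  refine hniso ⟨⟨f, fun {u w} => ⟨fun h => ?_, hf u w⟩⟩⟩
  by_cases hu : f u ∈ L
  · exact hreflect u w hu h
  · by_cases hw : f w ∈ L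
    · exact (hreflect w u hw h.symm).symm
    · exact absurd h (hind _ _ hu hw)
end
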